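/- The single-layer operator T : H̃^{-1/2}(Γ) → H^{1/2}(Γ) with kernel e^{ik|x−y|}/(4π|x−y|) is bijective with a bounded inverse; in particular, for every f ∈ H^{1/2}(Γ) the boundary integral equation Tψ = f has a unique solution ψ ∈ H̃^{-1/2}(Γ), and ‖ψ‖_{H^{-1/2}(ℝ²)} ≤ C ‖f‖_{H^{1/2}(Γ)} for a constant C independent of f. -/

import Mathlib

noncomputable section

open MeasureTheory Complex Filter Topology
open scoped Real NNReal ContDiff

/-- The plane `ℝ²`. -/
abbrev R2 : Type := EuclideanSpace ℝ (Fin 2)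

/-- Euclidean dot product on `ℝ²`. -/
def rdot (x ξ : R2) : ℝ := x 0 * ξ 0 + x 1 * ξ 1

/-- `testFT φ ξ = ∫ e^{i x·ξ} φ(x) dx`, the (inverse-type) Fourier integral of a
test function `φ`. -/
def testFT (φ : R2 → ℂ) (ξ : R2) : ℂ :=
  ∫ x : R2, Complex.exp (Complex.I * (rdot x ξ : ℂ)) * φ x

/-- The squared `H^s(ℝ²)` norm of the distribution whose Fourier transform is `F`:
`‖f‖² = (2π)⁻² ∫ (1+|ξ|²)^s |f̂(ξ)|² dξ`. -/
def wnormSq (s : ℝ) (F : R2 → ℂ) : ℝ :=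
  ((2 * π) ^ 2)⁻¹ * ∫ ξ : R2, ((1 : ℝ) + ‖ξ‖ ^ 2) ^ s * ‖F ξ‖ ^ 2

/-- The `H^s(ℝ²)` norm (Fourier-side representation). -/
def wnorm (s : ℝ) (F : R2 → ℂ) : ℝ := Real.sqrt (wnormSq s F)

/-- `F` is the Fourier transform of an element of `H^s(ℝ²)`. -/
def MemHs (s : ℝ) (F : R2 → ℂ) : Prop :=
  AEStronglyMeasurable F (volume : Measure R2) ∧
    Integrable (fun ξ : R2 => ((1 : ℝ) + ‖ξ‖ ^ 2) ^ s * ‖F ξ‖ ^ 2) volume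

/-- An element `f` of `H̃^s(Γ)`: a distribution on `ℝ²` of Sobolev regularity `s`
supported in the closure of `Γ`, represented by its Fourier transform `ft`
(a continuous function, `f` being a compactly supported distribution).
The support condition is expressed by testing against smooth compactly supported
functions `φ` whose support avoids `closure Γ`, via the Parseval pairing
`∫ f φ dx = (2π)⁻² ∫ f̂(ξ) φ̌(ξ) dξ` with `φ̌(ξ) = ∫ e^{ix·ξ} φ(x) dx`. -/
structure HTildeElt (s : ℝ) (Γ : Set R2) where
  ft : R2 → ℂ
  cont : Continuous ft
  mem : Integrable (fun ξ : R2 => ((1 : ℝ) + ‖ξ‖ ^ 2) ^ s * ‖ft ξ‖ ^ 2) volume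
  supp : ∀ φ : R2 → ℂ, ContDiff ℝ ∞ φ → HasCompactSupport φ →
    tsupport φ ∩ closure Γ = ∅ → (∫ ξ : R2, ft ξ * testFT φ ξ) = 0

/-- `Γ` is a bounded Lipschitz domain in `ℝ²`: a nonempty bounded open set whose
boundary is locally, after a rigid motion, the graph of a Lipschitz function with
the domain on one side. -/
def IsLipschitzDomain (Γ : Set R2) : Prop :=
  IsOpen Γ ∧ Bornology.IsBounded Γ ∧ Γ.Nonempty ∧
    ∀ x ∈ frontier Γ, ∃ (e : R2 ≃ₗᵢ[ℝ] R2) (L : ℝ≥0) (f : ℝ → ℝ) (U : Set R2),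
      LipschitzWith L f ∧ IsOpen U ∧ x ∈ U ∧
        ∀ y ∈ U, (y ∈ Γ ↔ f (e y 0) < e y 1)

/-- `ξ·V̂(ξ)`, i.e. `-i` times the Fourier transform of `div V`. -/
def dotFt (F1 F2 : R2 → ℂ) (ξ : R2) : ℂ := (ξ 0 : ℂ) * F1 ξ + (ξ 1 : ℂ) * F2 ξ

/-- `ξ⊥·V̂(ξ)`, i.e. `-i` times the Fourier transform of `curl V`. -/
def curlFt (F1 F2 : R2 → ℂ) (ξ : R2) : ℂ := (ξ 1 : ℂ) * F1 ξ - (ξ 0 : ℂ) * F2 ξ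

/-- An element of `X = H̃^{-1/2}_div(Γ)`: a pair of elements of `H̃^{-1/2}(Γ)`
whose distributional divergence also belongs to `H̃^{-1/2}(Γ)`. -/
structure Xelt (Γ : Set R2) where
  c1 : HTildeElt (-(1/2) : ℝ) Γ
  c2 : HTildeElt (-(1/2) : ℝ) Γ
  divMem : Integrable (fun ξ : R2 =>
    ((1 : ℝ) + ‖ξ‖ ^ 2) ^ (-(1/2) : ℝ) * ‖dotFt c1.ft c2.ft ξ‖ ^ 2) volume

/-- The Fourier transform of `div V`. -/
def divFt {Γ : Set R2} (V : Xelt Γ) (ξ : R2) : ℂ :=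
  Complex.I * dotFt V.c1.ft V.c2.ft ξ

/-- The squared `H`-norm `‖V‖²_H` of a vector field. -/
def HnormSq {Γ : Set R2} (V : Xelt Γ) : ℝ :=
  wnormSq (-(1/2)) V.c1.ft + wnormSq (-(1/2)) V.c2.ft

/-- The squared `X`-norm `‖V‖²_X = ‖V‖²_H + ‖div V‖²_{H̃^{-1/2}}`. -/
def XnormSq {Γ : Set R2} (V : Xelt Γ) : ℝ :=
  HnormSq V + wnormSq (-(1/2)) (divFt V)

/-- The `X`-norm. -/
def Xnorm {Γ : Set R2} (V : Xelt Γ) : ℝ := Real.sqrt (XnormSq V)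

/-- `ĝ₀(ξ) = i/√(k²-|ξ|²)`, with the branch `√(k²-|ξ|²) = i√(|ξ|²-k²)` for `|ξ| > k`. -/
def g0hat (k : ℝ) (ξ : R2) : ℂ :=
  if ‖ξ‖ < k then Complex.I / ((Real.sqrt (k ^ 2 - ‖ξ‖ ^ 2) : ℝ) : ℂ)
  else 1 / ((Real.sqrt (‖ξ‖ ^ 2 - k ^ 2) : ℝ) : ℂ)

/-- The integrand of the sesquilinear form `B`:
`ĝ₀(ξ) [ (|ξ|²-k²) a₁ b̄₁ - k² a₂ b̄₂ ]` with `a₁ = ξ·Ŵ/|ξ|`, `a₂ = ξ⊥·Ŵ/|ξ|`, etc. -/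
def Bintegrand (k : ℝ) (F1 F2 G1 G2 : R2 → ℂ) (ξ : R2) : ℂ :=
  g0hat k ξ *
    (((‖ξ‖ ^ 2 - k ^ 2 : ℝ) : ℂ) * (dotFt F1 F2 ξ * starRingEnd ℂ (dotFt G1 G2 ξ)) -
      ((k ^ 2 : ℝ) : ℂ) * (curlFt F1 F2 ξ * starRingEnd ℂ (curlFt G1 G2 ξ))) /
    ((‖ξ‖ ^ 2 : ℝ) : ℂ)

/-- The sesquilinear form `B(W,V)`. -/
def Bform (k : ℝ) {Γ : Set R2} (W V : Xelt Γ) : ℂ :=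
  ∫ ξ : R2, Bintegrand k W.c1.ft W.c2.ft V.c1.ft V.c2.ft ξ

/-- The sesquilinear form `E(q,V) = B(curl⃗ q, V)`, where
`curl⃗ q = (∂q/∂x₂, -∂q/∂x₁)` has Fourier transform `(iξ₂ q̂, -iξ₁ q̂)`. -/
def Eform (k : ℝ) {Γ : Set R2} (q : HTildeElt (1/2 : ℝ) Γ) (V : Xelt Γ) : ℂ :=
  ∫ ξ : R2, Bintegrand k (fun η => Complex.I * (η 1 : ℂ) * q.ft η)
      (fun η => -(Complex.I * (η 0 : ℂ) * q.ft η)) V.c1.ft V.c2.ft ξ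

/-- The inner product of the Hilbert space `X`; by the Riesz representation
theorem, every bounded conjugate-linear functional on `X` is `V ↦ Xinner Y V`
for a unique `Y ∈ X`, with functional norm `Xnorm Y`. -/
def Xinner {Γ : Set R2} (Y V : Xelt Γ) : ℂ :=
  ((((2 * π) ^ 2)⁻¹ : ℝ) : ℂ) * ∫ ξ : R2, ((((1 : ℝ) + ‖ξ‖ ^ 2) ^ (-(1/2) : ℝ) : ℝ) : ℂ) *
    (Y.c1.ft ξ * starRingEnd ℂ (V.c1.ft ξ) + Y.c2.ft ξ * starRingEnd ℂ (V.c2.ft ξ) +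
      divFt Y ξ * starRingEnd ℂ (divFt V ξ))

/-- `√(k²-|ξ|²)`, with the branch `i√(|ξ|²-k²)` for `|ξ| > k`. -/
def rootk (k : ℝ) (ξ : R2) : ℂ :=
  if ‖ξ‖ < k then ((Real.sqrt (k ^ 2 - ‖ξ‖ ^ 2) : ℝ) : ℂ)
  else Complex.I * ((Real.sqrt (‖ξ‖ ^ 2 - k ^ 2) : ℝ) : ℂ)

/-- The Fourier multiplier `i/(2√(k²-|ξ|²))` of the Helmholtz single-layer
operator `T` with kernel `e^{ik|x-y|}/(4π|x-y|)`. -/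
def mT (k : ℝ) (ξ : R2) : ℂ := Complex.I / (2 * rootk k ξ)

/-- The Fourier multiplier `1/(2|ξ|)` of the Laplace single-layer operator `T₀`
with kernel `1/(4π|x-y|)`. -/
def mT0 (ξ : R2) : ℂ := 1 / (2 * ((‖ξ‖ : ℝ) : ℂ))

/-- The Fourier multiplier of `R = T - T₀`. -/
def mR (k : ℝ) (ξ : R2) : ℂ := mT k ξ - mT0 ξ

/-- The distributions with Fourier data `G` and `E` have the same restriction to
the open set `Γ`: `⟨G - E, φ⟩ = 0` for all smooth `φ` compactly supported in `Γ`
(pairing written on the Fourier side). -/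
def AgreeOn (Γ : Set R2) (G E : R2 → ℂ) : Prop :=
  ∀ φ : R2 → ℂ, ContDiff ℝ ∞ φ → HasCompactSupport φ → tsupport φ ⊆ Γ →
    (∫ ξ : R2, (G ξ - E ξ) * testFT φ ξ) = 0

/-- The duality pairing `⟨f, ψ⟩` between `H^{1/2}(Γ)` and `H̃^{-1/2}(Γ)`, written
on the Fourier side (Plancherel): `(2π)⁻² ∫ f̂(ξ) conj(ψ̂(ξ)) dξ`, where `G = f̂`
is the Fourier data of (an extension of) `f`. -/
def dualPair (G ψ : R2 → ℂ) : ℂ :=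
  ((((2 * π) ^ 2)⁻¹ : ℝ) : ℂ) * ∫ ξ : R2, G ξ * starRingEnd ℂ (ψ ξ)

section helpers18

open scoped FourierTransform SchwartzMap Pointwise

open scoped FourierTransform SchwartzMap

lemma inner_eq_rdot (x ξ : R2) : inner ℝ x ξ = rdot x ξ := by
  simp [PiLp.inner_apply, Fin.sum_univ_two, rdot, mul_comm]

lemma rdot_eq_inner (x ξ : R2) : rdot x ξ = inner ℝ x ξ := (inner_eq_rdot x ξ).symm

lemma rdot_add_right (x ξ η : R2) : rdot x (ξ + η) = rdot x ξ + rdot x η := by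
  simp only [rdot_eq_inner, inner_add_right]
lemma rdot_sub_right (x ξ η : R2) : rdot x (ξ - η) = rdot x ξ - rdot x η := by
  simp only [rdot_eq_inner, inner_sub_right]
lemma rdot_sub_left (x ξ η : R2) : rdot (ξ - η) x = rdot ξ x - rdot η x := by
  simp only [rdot_eq_inner, inner_sub_left]
lemma rdot_neg_right (x ξ : R2) : rdot x (-ξ) = - rdot x ξ := by
  simp only [rdot_eq_inner, inner_neg_right]
lemma rdot_neg_left (x ξ : R2) : rdot (-x) ξ = - rdot x ξ := by
  simp only [rdot_eq_inner, inner_neg_left]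
lemma rdot_comm (x ξ : R2) : rdot x ξ = rdot ξ x := by
  simp only [rdot_eq_inner, real_inner_comm]

@[fun_prop]
lemma continuous_rdot {α : Type*} [TopologicalSpace α] {f g : α → R2} (hf : Continuous f)
    (hg : Continuous g) : Continuous (fun a => rdot (f a) (g a)) := by
  simp only [rdot_eq_inner]; exact hf.inner hg

lemma norm_exp_rdot (x ξ : R2) : ‖Complex.exp (Complex.I * (rdot x ξ : ℂ))‖ = 1 := by
  rw [mul_comm]; exact Complex.norm_exp_ofReal_mul_I _

lemma testFT_eq (φ : R2 → ℂ) (ξ : R2) : testFT φ ξ = 𝓕⁻ φ ((2 * π)⁻¹ • ξ) := by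
  rw [Real.fourierInv_eq', testFT]
  congr 1; ext x
  rw [smul_eq_mul, inner_smul_right, inner_eq_rdot]
  congr 2
  have : (π : ℂ) ≠ 0 := by exact_mod_cast Real.pi_ne_zero
  push_cast
  field_simp

/-- scaling equivalence -/
def scal : R2 ≃L[ℝ] R2 :=
  ContinuousLinearEquiv.smulLeft (Units.mk0 ((2 * π)⁻¹ : ℝ) (by positivity))

lemma scal_apply (ξ : R2) : scal ξ = (2 * π)⁻¹ • ξ := rfl

/-- `testFT` as a map of Schwartz functions -/
def tS (Φ : 𝓢(R2, ℂ)) : 𝓢(R2, ℂ) :=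
  SchwartzMap.compCLMOfContinuousLinearEquiv ℂ scal (𝓕⁻ Φ)

lemma tS_apply (Φ : 𝓢(R2, ℂ)) (ξ : R2) : tS Φ ξ = testFT Φ ξ := by
  rw [testFT_eq, tS, SchwartzMap.compCLMOfContinuousLinearEquiv_apply, Function.comp, scal_apply,
    SchwartzMap.fourierInv_coe]

lemma tS_coe (Φ : 𝓢(R2, ℂ)) : (tS Φ : R2 → ℂ) = testFT Φ := funext (tS_apply Φ)

lemma testFT_testFT (Φ : 𝓢(R2, ℂ)) (x : R2) :
    testFT (testFT Φ) (-x) = ((2 * π) ^ 2 : ℝ) * Φ x := by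
  obtain ⟨g, hg⟩ : ∃ g : R2 → ℂ, g = fun w : R2 =>
      Complex.exp (((-2 * π * inner ℝ w x : ℝ) : ℂ) * Complex.I) • (𝓕⁻ (Φ : R2 → ℂ)) w := ⟨_, rfl⟩
  have h1 : testFT (testFT Φ) (-x) = ∫ ξ : R2, g ((2 * π)⁻¹ • ξ) := by
    rw [testFT]
    congr 1; ext ξ
    simp only [hg]
    rw [testFT_eq, smul_eq_mul, inner_smul_left, inner_eq_rdot, rdot_neg_right]
    congr 2
    have : (π : ℂ) ≠ 0 := by exact_mod_cast Real.pi_ne_zero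
    simp
    field_simp
  have h3 := fun g : R2 → ℂ => Measure.integral_comp_smul (volume : Measure R2) g (2 * π)⁻¹
  rw [h1, h3, hg, ← Real.fourier_eq', ← SchwartzMap.fourierInv_coe,
    ← SchwartzMap.fourier_coe, FourierInvPair.fourier_fourierInv_eq]
  simp [abs_of_pos Real.pi_pos]
  left
  have : (π : ℂ) ≠ 0 := by exact_mod_cast Real.pi_ne_zero
  field_simp

lemma testFT_flip {f g : R2 → ℂ} (hf : Integrable f) (hg : Integrable g) :
    ∫ ξ, f ξ * testFT g ξ = ∫ x, testFT f x * g x := by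
  have hIntg : Integrable (fun p : R2 × R2 =>
      f p.1 * (Complex.exp (Complex.I * (rdot p.2 p.1 : ℂ)) * g p.2)) (volume.prod volume) := by
    have h0 : Integrable (fun p : R2 × R2 => f p.1 * g p.2) (volume.prod volume) := hf.mul_prod hg
    have := h0.bdd_mul (c := 1) (f := fun p : R2 × R2 =>
      Complex.exp (Complex.I * (rdot p.2 p.1 : ℂ)))
      (by apply Continuous.aestronglyMeasurable; fun_prop)
      (Eventually.of_forall fun p => (norm_exp_rdot _ _).le)
    refine this.congr (Eventually.of_forall fun p => ?_)
    simp only; ring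
  calc ∫ ξ, f ξ * testFT g ξ
      = ∫ ξ, ∫ x, f ξ * (Complex.exp (Complex.I * (rdot x ξ : ℂ)) * g x) := by
        congr 1; ext ξ; rw [testFT, integral_const_mul]
    _ = ∫ x, ∫ ξ, f ξ * (Complex.exp (Complex.I * (rdot x ξ : ℂ)) * g x) :=
        integral_integral_swap hIntg
    _ = ∫ x, testFT f x * g x := by
        congr 1; ext x
        rw [testFT, ← integral_mul_const]
        congr 1; ext ξ
        rw [rdot_comm]; ring

lemma testFT_refl (f : R2 → ℂ) (ξ : R2) : testFT (fun x => f (-x)) ξ = testFT f (-ξ) := by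
  rw [testFT, testFT, ← integral_neg_eq_self]
  congr 1; ext x
  simp [rdot_neg_left, rdot_neg_right]

lemma testFT_mod (f : R2 → ℂ) (a ξ : R2) :
    testFT (fun x => Complex.exp (Complex.I * (rdot x a : ℂ)) * f x) ξ = testFT f (ξ + a) := by
  rw [testFT, testFT]
  congr 1; ext x
  rw [← mul_assoc, ← Complex.exp_add, rdot_add_right]; push_cast; ring_nf

lemma testFT_shift (f : R2 → ℂ) (x ξ : R2) :
    testFT (fun y => f (x - y)) ξ = Complex.exp (Complex.I * (rdot x ξ : ℂ)) * testFT f (-ξ) := by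
  rw [testFT, testFT, ← integral_const_mul, ← integral_sub_left_eq_self _ _ x]
  congr 1; ext y
  rw [← mul_assoc, ← Complex.exp_add, rdot_sub_left, rdot_neg_right]
  push_cast; ring_nf; simp

/-- reflection -/
def rS (Φ : 𝓢(R2, ℂ)) : 𝓢(R2, ℂ) :=
  SchwartzMap.compCLMOfContinuousLinearEquiv ℂ (ContinuousLinearEquiv.neg ℝ) Φ

lemma rS_apply (Φ : 𝓢(R2, ℂ)) (x : R2) : rS Φ x = Φ (-x) := rfl

lemma tS_surj (g : 𝓢(R2, ℂ)) : ∃ Φ : 𝓢(R2, ℂ), ∀ ξ, testFT Φ ξ = g ξ := by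
  refine ⟨((((2 * π) ^ 2)⁻¹ : ℝ) : ℂ) • rS (tS g), fun ξ => ?_⟩
  have h : testFT (rS (tS g)) ξ = testFT (testFT g) (-ξ) := by
    rw [← testFT_refl]; congr 1; ext x
    rw [rS_apply, tS_apply]
  have h2 : testFT (((((2 * π) ^ 2)⁻¹ : ℝ) : ℂ) • rS (tS g) : 𝓢(R2, ℂ)) ξ =
      ((((2 * π) ^ 2)⁻¹ : ℝ) : ℂ) * testFT (rS (tS g)) ξ := by
    rw [testFT, testFT, ← integral_const_mul]
    congr 1; ext x
    simp; ring
  have : (π : ℂ) ≠ 0 := by exact_mod_cast Real.pi_ne_zero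
  rw [h2, h, testFT_testFT]
  push_cast
  field_simp

/-- product/convolution -/
lemma conv_testFT (χ φ : 𝓢(R2, ℂ)) (η : R2) :
    ∫ ξ, testFT χ (η - ξ) * testFT φ ξ = ((2 * π) ^ 2 : ℝ) * testFT (fun x => χ x * φ x) η := by
  set f : R2 → ℂ := fun x => Complex.exp (Complex.I * (rdot x (-η) : ℂ)) * χ (-x) with hf
  have hfi : Integrable f := by
    have h0 : Integrable (fun x : R2 => χ (-x)) := (rS χ).integrable
    exact h0.bdd_mul (c := 1) (by apply Continuous.aestronglyMeasurable; fun_prop)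
      (Eventually.of_forall fun p => (norm_exp_rdot _ _).le)
  have h1 : ∀ ξ, testFT χ (η - ξ) = testFT f ξ := by
    intro ξ
    rw [hf, testFT_mod (fun x => χ (-x)), testFT_refl]; congr 1; abel
  simp_rw [h1]
  have hg : Integrable (testFT φ) := by rw [← tS_coe]; exact (tS φ).integrable
  rw [← testFT_flip hfi hg, ← integral_neg_eq_self, testFT, ← integral_const_mul]
  congr 1; ext x
  rw [testFT_testFT]
  simp only [hf, rdot_neg_left, rdot_neg_right, neg_neg]
  ring

open scoped FourierTransform SchwartzMap

/-- polynomially weighted integrability -/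
def TG (ψ : R2 → ℂ) : Prop := Integrable (fun η : R2 => ψ η * ((((1 + ‖η‖) ^ 3)⁻¹ : ℝ) : ℂ))

lemma schwartz_decay (S : 𝓢(R2, ℂ)) (n : ℕ) : ∃ C > 0, ∀ ξ, ‖S ξ‖ ≤ C * ((1 + ‖ξ‖) ^ n)⁻¹ := by
  refine ⟨2 ^ n * ((Finset.Iic (n, 0)).sup fun m => SchwartzMap.seminorm ℝ m.1 m.2) S + 1,
    by positivity, fun ξ => ?_⟩
  have := SchwartzMap.one_add_le_sup_seminorm_apply (𝕜 := ℝ) (m := (n, 0)) (k := n) (n := 0)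
    le_rfl le_rfl S ξ
  simp only [norm_iteratedFDeriv_zero] at this
  rw [← div_eq_mul_inv, le_div_iff₀ (by positivity), mul_comm]
  linarith

lemma TG.aesm {ψ : R2 → ℂ} (h : TG ψ) : AEStronglyMeasurable ψ volume := by
  have h2 : AEStronglyMeasurable (fun η : R2 => ((((1 + ‖η‖) ^ 3) : ℝ) : ℂ)) volume := by
    apply Continuous.aestronglyMeasurable; fun_prop
  refine (h.1.mul h2).congr (Eventually.of_forall fun η => ?_)
  have : ((1 + ‖η‖ : ℝ) : ℂ) ≠ 0 := by
    exact_mod_cast (by positivity : (0 : ℝ) < 1 + ‖η‖).ne'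
  simp only [Pi.mul_apply]
  push_cast at this ⊢
  field_simp

lemma TG.int_of_bound {ψ g : R2 → ℂ} (h : TG ψ) (hg : AEStronglyMeasurable g volume) (C : ℝ)
    (hC : ∀ ξ, ‖g ξ‖ ≤ C * ((1 + ‖ξ‖) ^ 3)⁻¹) : Integrable (fun ξ => ψ ξ * g ξ) := by
  refine (h.norm.const_mul C).mono (h.aesm.mul hg) (Eventually.of_forall fun ξ => ?_)
  rw [norm_mul, Real.norm_eq_abs, abs_mul, abs_norm, norm_mul, Complex.norm_real, Real.norm_eq_abs,
    abs_of_nonneg (by positivity : (0:ℝ) ≤ ((1 + ‖ξ‖) ^ 3)⁻¹)]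
  calc ‖ψ ξ‖ * ‖g ξ‖ ≤ ‖ψ ξ‖ * (C * ((1 + ‖ξ‖) ^ 3)⁻¹) := by gcongr; exact hC ξ
    _ = C * (‖ψ ξ‖ * ((1 + ‖ξ‖) ^ 3)⁻¹) := by ring
    _ ≤ _ := by gcongr; exact le_abs_self C

lemma TG.int {ψ : R2 → ℂ} (h : TG ψ) (S : 𝓢(R2, ℂ)) : Integrable (fun ξ => ψ ξ * S ξ) := by
  obtain ⟨C, -, hC⟩ := schwartz_decay S 3
  exact h.int_of_bound S.continuous.aestronglyMeasurable C hC

lemma TG.int_pow {ψ : R2 → ℂ} (h : TG ψ) (S : 𝓢(R2, ℂ)) (n : ℕ) :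
    Integrable (fun ξ => ‖ξ‖ ^ n * ‖ψ ξ * S ξ‖) := by
  obtain ⟨C, hC0, hC⟩ := schwartz_decay S (n + 3)
  have := h.int_of_bound (g := fun ξ => ((‖ξ‖ ^ n : ℝ) : ℂ) * S ξ)
    (by apply Continuous.aestronglyMeasurable; have := S.continuous; fun_prop) C ?_
  · refine this.norm.congr (Eventually.of_forall fun ξ => ?_)
    simp only [norm_mul, Complex.norm_real, norm_pow, norm_norm]; ring
  · intro ξ
    simp only [norm_mul, Complex.norm_real, norm_pow, norm_norm]
    calc ‖ξ‖ ^ n * ‖S ξ‖ ≤ (1 + ‖ξ‖) ^ n * (C * ((1 + ‖ξ‖) ^ (n + 3))⁻¹) := by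
          gcongr
          · linarith
          · exact hC ξ
      _ = _ := by rw [pow_add]; field_simp

lemma int_weight : Integrable (fun η : R2 => ((1 + ‖η‖) ^ 3)⁻¹) := by
  have := integrable_one_add_norm (E := R2) (μ := volume) (r := 3) (by simp; norm_num)
  refine this.congr (Eventually.of_forall fun η => ?_)
  simp only
  rw [Real.rpow_neg (by positivity)]
  norm_cast

/-- the Japanese bracket powers -/
lemma J_pos (ξ : R2) : (0 : ℝ) < 1 + ‖ξ‖ ^ 2 := by positivity

lemma J_half_le (ξ : R2) : ((1 : ℝ) + ‖ξ‖ ^ 2) ^ (1/2 : ℝ) ≤ 1 + ‖ξ‖ := by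
  rw [← Real.sqrt_eq_rpow]
  apply Real.sqrt_le_iff.mpr ⟨by positivity, by nlinarith [norm_nonneg ξ]⟩

lemma le_J_half (ξ : R2) : 1 + ‖ξ‖ ≤ 2 * ((1 : ℝ) + ‖ξ‖ ^ 2) ^ (1/2 : ℝ) := by
  rw [← Real.sqrt_eq_rpow]
  have h1 : (1 : ℝ) ≤ √(1 + ‖ξ‖ ^ 2) := Real.le_sqrt_of_sq_le (by nlinarith [norm_nonneg ξ])
  have h2 : ‖ξ‖ ≤ √(1 + ‖ξ‖ ^ 2) := Real.le_sqrt_of_sq_le (by nlinarith [norm_nonneg ξ])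
  linarith

lemma J_neg_half (ξ : R2) :
    ((1 : ℝ) + ‖ξ‖ ^ 2) ^ (-(1/2) : ℝ) = (((1 : ℝ) + ‖ξ‖ ^ 2) ^ (1/2 : ℝ))⁻¹ :=
  Real.rpow_neg (J_pos ξ).le _

lemma le_J_neg_half (ξ : R2) : (1 + ‖ξ‖)⁻¹ ≤ ((1 : ℝ) + ‖ξ‖ ^ 2) ^ (-(1/2) : ℝ) := by
  rw [J_neg_half]
  have := Real.rpow_pos_of_pos (J_pos ξ) (1/2)
  gcongr
  exact J_half_le ξ

lemma J_neg_half_le (ξ : R2) : ((1 : ℝ) + ‖ξ‖ ^ 2) ^ (-(1/2) : ℝ) ≤ 2 * (1 + ‖ξ‖)⁻¹ := by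
  rw [J_neg_half]
  have := Real.rpow_pos_of_pos (J_pos ξ) (1/2)
  rw [← div_eq_mul_inv, inv_eq_one_div, div_le_div_iff₀ this (by positivity)]
  linarith [le_J_half ξ]

/-- simpler form of membership in `H^{-1/2}` -/
lemma memHs_iff {ψ : R2 → ℂ} : MemHs (-(1/2)) ψ ↔
    AEStronglyMeasurable ψ volume ∧ Integrable (fun ξ : R2 => (1 + ‖ξ‖)⁻¹ * ‖ψ ξ‖ ^ 2) := by
  have c1 : Continuous (fun ξ : R2 => ((1 : ℝ) + ‖ξ‖ ^ 2) ^ (-(1/2) : ℝ)) := by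
    apply Continuous.rpow_const (by fun_prop); intro x; left; exact (J_pos x).ne'
  have c2 : Continuous (fun ξ : R2 => (1 + ‖ξ‖)⁻¹) := by
    apply Continuous.inv₀ (by fun_prop); intro x; positivity
  constructor
  · rintro ⟨h1, h2⟩
    refine ⟨h1, h2.mono (c2.aestronglyMeasurable.mul (h1.norm.pow 2))
      (Eventually.of_forall fun ξ => ?_)⟩
    have := Real.rpow_pos_of_pos (J_pos ξ) (-(1/2))
    rw [Real.norm_of_nonneg (by positivity), Real.norm_of_nonneg (by positivity)]
    gcongr; exact le_J_neg_half ξ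
  · rintro ⟨h1, h2⟩
    refine ⟨h1, (h2.const_mul 2).mono (c1.aestronglyMeasurable.mul (h1.norm.pow 2))
      (Eventually.of_forall fun ξ => ?_)⟩
    have := Real.rpow_pos_of_pos (J_pos ξ) (-(1/2))
    rw [Real.norm_of_nonneg (by positivity), Real.norm_of_nonneg (by positivity), ← mul_assoc]
    gcongr; exact J_neg_half_le ξ

lemma MemHs.tg {ψ : R2 → ℂ} (h : MemHs (-(1/2)) ψ) : TG ψ := by
  obtain ⟨h1, h2⟩ := memHs_iff.1 h
  have c : Continuous (fun η : R2 => ((((1 + ‖η‖) ^ 3)⁻¹ : ℝ) : ℂ)) := by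
    apply Complex.continuous_ofReal.comp
    apply Continuous.inv₀ (by fun_prop); intro x; positivity
  refine (h2.add int_weight).mono (h1.mul c.aestronglyMeasurable)
    (Eventually.of_forall fun ξ => ?_)
  simp only [Pi.add_apply]
  rw [norm_mul, Complex.norm_real, Real.norm_of_nonneg (by positivity),
    Real.norm_of_nonneg (by positivity)]
  set a := 1 + ‖ξ‖ with ha
  have ha1 : 1 ≤ a := by simp [ha]
  have hi : a⁻¹ ≤ 1 := inv_le_one_of_one_le₀ ha1
  have hp : 0 < a⁻¹ := by positivity
  have e : (a ^ 3)⁻¹ = a⁻¹ ^ 3 := by simp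
  rw [e]
  set b := a⁻¹
  set p := ‖ψ ξ‖
  have : p * b ^ 3 ≤ b * (p ^ 2 + b ^ 4) := by nlinarith [sq_nonneg (p - b ^ 2), sq_nonneg (b^2), sq_nonneg p]
  have h4 : b * b ^ 4 ≤ b ^ 3 := by
    have : b ^ 5 ≤ b ^ 3 := pow_le_pow_of_le_one hp.le hi (by norm_num)
    linarith [this, (by ring : b * b ^ 4 = b ^ 5)]
  linarith

/-- Uniqueness -/
lemma testFT_integral_zero {f : R2 → ℂ} (hf : Integrable f) (h : ∀ x, testFT f x = 0) :
    f =ᵐ[volume] 0 := by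
  refine ae_eq_zero_of_integral_contDiff_smul_eq_zero hf.locallyIntegrable ?_
  intro g hg hgc
  have hgC : ContDiff ℝ ∞ (fun x => (g x : ℂ)) := Complex.ofRealCLM.contDiff.comp hg
  have hcC : HasCompactSupport (fun x => (g x : ℂ)) :=
    hgc.comp_left (g := fun r : ℝ => (r : ℂ)) (by simp)
  obtain ⟨Φ, hΦ⟩ := tS_surj (hcC.toSchwartzMap hgC)
  have := testFT_flip hf Φ.integrable
  simp only [h, zero_mul, integral_zero, hΦ] at this
  rw [← this]
  congr 1; ext x
  simp [mul_comm]

lemma exists_bump (a : R2) (ε : ℝ) (hε : 0 < ε) : ∃ η : R2 → ℂ, ContDiff ℝ ∞ η ∧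
    HasCompactSupport η ∧ tsupport η ⊆ Metric.closedBall a ε ∧ (∀ ξ, ‖testFT η ξ‖ ≤ 1) ∧
    ∀ ξ, ‖testFT η ξ - 1‖ ≤ (‖a‖ + ε) * ‖ξ‖ := by
  let f : ContDiffBump a := ⟨ε / 2, ε, by positivity, by linarith⟩
  set g : R2 → ℝ := f.normed volume with hg
  have hgc : HasCompactSupport g := f.hasCompactSupport_normed
  have hgd : ContDiff ℝ ∞ g := f.contDiff_normed
  have hgi : Integrable g := f.integrable_normed
  have hg1 : ∫ x, g x = 1 := f.integral_normed
  have hg0 : ∀ x, 0 ≤ g x := f.nonneg_normed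
  have hgs : ∀ x, g x ≠ 0 → ‖x - a‖ ≤ ε := by
    intro x hx
    have : x ∈ Function.support g := hx
    rw [hg, f.support_normed_eq] at this
    exact (mem_ball_iff_norm.1 this).le
  have hgC : Integrable (fun x => (g x : ℂ)) := hgi.ofReal
  refine ⟨fun x => (g x : ℂ), Complex.ofRealCLM.contDiff.comp hgd,
    hgc.comp_left (g := fun r : ℝ => (r : ℂ)) (by simp), ?_, ?_, ?_⟩
  · apply closure_minimal _ Metric.isClosed_closedBall
    intro x hx
    rw [mem_closedBall_iff_norm]
    apply hgs; simpa using hx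
  · intro ξ
    rw [testFT]
    refine (norm_integral_le_integral_norm _).trans ?_
    rw [← hg1]
    apply le_of_eq
    congr 1; ext x
    rw [norm_mul, norm_exp_rdot, one_mul, Complex.norm_real, Real.norm_of_nonneg (hg0 x)]
  · intro ξ
    have h1 : testFT (fun x => (g x : ℂ)) ξ - 1 =
        ∫ x, (Complex.exp (Complex.I * (rdot x ξ : ℂ)) - 1) * g x := by
      have : (1 : ℂ) = ∫ x, (g x : ℂ) := by rw [integral_complex_ofReal, hg1]; simp
      rw [this, testFT, ← integral_sub _ hgC, ← this]
      · congr 1; ext x; ring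
      · exact hgC.bdd_mul (c := 1) (by apply Continuous.aestronglyMeasurable; fun_prop)
          (Eventually.of_forall fun p => (norm_exp_rdot _ _).le)
    rw [h1]
    refine (norm_integral_le_integral_norm _).trans ?_
    rw [← mul_one ((‖a‖ + ε) * ‖ξ‖), ← hg1, ← integral_const_mul]
    apply integral_mono_of_nonneg (Eventually.of_forall fun x => norm_nonneg _)
      (hgi.const_mul _)
    refine Eventually.of_forall fun x => ?_
    simp only
    rw [norm_mul, Complex.norm_real, Real.norm_of_nonneg (hg0 x)]
    by_cases hx : g x = 0
    · simp [hx]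
    · apply mul_le_mul_of_nonneg_right _ (hg0 x)
      refine (Real.norm_exp_I_mul_ofReal_sub_one_le).trans ?_
      rw [rdot_eq_inner]
      refine (norm_inner_le_norm _ _).trans ?_
      gcongr
      have := norm_add_le (x - a) a
      rw [sub_add_cancel] at this
      linarith [hgs x hx]

lemma tg_zero {H : R2 → ℂ} (hH : TG H) (h : ∀ φ : R2 → ℂ, ContDiff ℝ ∞ φ → HasCompactSupport φ →
    (∫ ξ : R2, H ξ * testFT φ ξ) = 0) : H =ᵐ[volume] 0 := by
  choose η h1 h2 h3 h4 h5 using fun n : ℕ => exists_bump 0 (1 / ((n : ℝ) + 1)) (by positivity)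
  have key : ∀ n, (fun ξ => H ξ * testFT (η n) (-ξ)) =ᵐ[volume] 0 := by
    intro n
    have hi := hH.int (rS (tS ((h2 n).toSchwartzMap (h1 n))))
    have e : ∀ ξ, rS (tS ((h2 n).toSchwartzMap (h1 n))) ξ = testFT (η n) (-ξ) :=
      fun ξ => by rw [rS_apply, tS_apply]; rfl
    simp only [e] at hi
    apply testFT_integral_zero hi
    intro x
    rw [testFT, ← h (fun y => η n (x - y)) ((h1 n).comp (contDiff_const.sub contDiff_id))
      ((h2 n).comp_homeomorph (Homeomorph.subLeft x))]
    congr 1; ext ξ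
    rw [testFT_shift]
    rw [rdot_comm, mul_left_comm]
  have := ae_all_iff.2 key
  filter_upwards [this] with ξ hξ
  have ht : Tendsto (fun n => H ξ * testFT (η n) (-ξ)) atTop (𝓝 (H ξ * 1)) := by
    apply Tendsto.const_mul
    rw [tendsto_iff_norm_sub_tendsto_zero]
    refine squeeze_zero (fun n => norm_nonneg _) (fun n => h5 n (-ξ)) ?_
    have := (tendsto_one_div_add_atTop_nhds_zero_nat (𝕜 := ℝ)).mul_const ‖-ξ‖
    simpa using this
  have h0 : Tendsto (fun n => H ξ * testFT (η n) (-ξ)) atTop (𝓝 0) := by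
    simp only [hξ]; exact tendsto_const_nhds
  simpa using tendsto_nhds_unique ht h0

/-- mollification of a compactly supported distribution -/
lemma mollify {ψ : R2 → ℂ} (hψ : TG ψ) (hc : Continuous ψ) {K : Set R2} (hK : IsCompact K)
    (hs : ∀ φ : R2 → ℂ, ContDiff ℝ ∞ φ → HasCompactSupport φ →
      tsupport φ ∩ K = ∅ → (∫ ξ : R2, ψ ξ * testFT φ ξ) = 0)
    {η : R2 → ℂ} (h1 : ContDiff ℝ ∞ η) (h2 : HasCompactSupport η) :
    ∃ φ : R2 → ℂ, ContDiff ℝ ∞ φ ∧ HasCompactSupport φ ∧ tsupport φ ⊆ K + tsupport η ∧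
      ∀ ξ, testFT φ (-ξ) = ψ ξ * testFT η (-ξ) := by
  set f : R2 → ℂ := fun ξ => ψ ξ * testFT η (-ξ) with hf
  set S := rS (tS (h2.toSchwartzMap h1)) with hS
  have hSe : ∀ ξ, S ξ = testFT η (-ξ) := fun ξ => by rw [hS, rS_apply, tS_apply]; rfl
  have hfS : f = fun ξ => ψ ξ * S ξ := by ext ξ; rw [hSe]
  have hfi : Integrable f := by rw [hfS]; exact hψ.int S
  have hfc : Continuous f := by rw [hfS]; exact hc.mul S.continuous
  set φ : R2 → ℂ := fun x => ((((2 * π) ^ 2)⁻¹ : ℝ) : ℂ) * testFT f x with hφ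
  have hd : ContDiff ℝ ∞ φ := by
    have e : testFT f = fun x => 𝓕 f (-((2 * π)⁻¹ • x)) := by
      ext x; rw [testFT_eq, Real.fourierInv_eq_fourier_neg]
    have : ContDiff ℝ ∞ (𝓕 f) := by
      apply Real.contDiff_fourier
      intro n _
      rw [hfS]; exact hψ.int_pow S n
    rw [hφ, e]
    apply contDiff_const.mul
    exact this.comp (contDiff_id.const_smul _).neg
  have hsub : Function.support φ ⊆ K + tsupport η := by
    intro x hx
    by_contra hxn
    apply hx
    have : testFT f x = 0 := by
      rw [testFT, ← hs (fun y => η (x - y)) (h1.comp (contDiff_const.sub contDiff_id))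
        (h2.comp_homeomorph (Homeomorph.subLeft x))]
      · congr 1; ext ξ
        rw [testFT_shift, rdot_comm]
        simp only [hf]; ring
      · rw [Set.eq_empty_iff_forall_notMem]
        rintro y ⟨hy, hyK⟩
        apply hxn
        have : x - y ∈ tsupport η := by
          have := tsupport_comp_subset_preimage (g := η) (f := fun y => x - y) (by fun_prop) hy
          simpa using this
        exact ⟨y, hyK, x - y, this, by simp⟩
    simp [hφ, this]
  have hKη : IsCompact (K + tsupport η) := hK.add h2
  have hts : tsupport φ ⊆ K + tsupport η := closure_minimal hsub hKη.isClosed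
  have hcs : HasCompactSupport φ := hKη.of_isClosed_subset (isClosed_tsupport _) hts
  refine ⟨φ, hd, hcs, hts, ?_⟩
  set G := rS (tS (hcs.toSchwartzMap hd)) with hG
  have hGe : ∀ ξ, G ξ = testFT φ (-ξ) := fun ξ => by rw [hG, rS_apply, tS_apply]; rfl
  have hzero : (fun ξ => G ξ - f ξ) =ᵐ[volume] 0 := by
    apply testFT_integral_zero (G.integrable.sub hfi)
    intro x
    have e1 : testFT (fun ξ => G ξ - f ξ) x = testFT G x - testFT f x := by
      simp only [testFT, mul_sub]
      rw [integral_sub]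
      · exact G.integrable.bdd_mul (c := 1) (by apply Continuous.aestronglyMeasurable; fun_prop)
          (Eventually.of_forall fun p => (norm_exp_rdot _ _).le)
      · exact hfi.bdd_mul (c := 1) (by apply Continuous.aestronglyMeasurable; fun_prop)
          (Eventually.of_forall fun p => (norm_exp_rdot _ _).le)
    have e2 : testFT G x = testFT (testFT φ) (-x) := by
      rw [← testFT_refl]; congr 1; ext ξ; rw [hGe]
    have e3 : testFT (testFT φ) (-x) = ((2 * π) ^ 2 : ℝ) * φ x :=
      testFT_testFT (hcs.toSchwartzMap hd) x
    have : (π : ℂ) ≠ 0 := by exact_mod_cast Real.pi_ne_zero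
    refine e1.trans ?_
    rw [e2, e3, hφ]
    push_cast
    field_simp
    simp
  have : (fun ξ => G ξ - f ξ) = 0 :=
    (Continuous.ae_eq_iff_eq volume (G.continuous.sub hfc) continuous_const).1 hzero
  intro ξ
  have := congrFun this ξ
  rw [← hGe]
  simpa [sub_eq_zero] using this

/-- Fourier-side multiplication by the smooth cutoff `χ`. -/
def cut (χ : 𝓢(R2, ℂ)) (ψ : R2 → ℂ) (ξ : R2) : ℂ :=
  ((((2 * π) ^ 2)⁻¹ : ℝ) : ℂ) * ∫ η, ψ η * testFT χ (η - ξ)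

lemma one_add_norm_sub (ξ η : R2) : 1 + ‖η‖ ≤ (1 + ‖η - ξ‖) * (1 + ‖ξ‖) := by
  have := norm_add_le (η - ξ) ξ
  rw [sub_add_cancel] at this
  nlinarith [norm_nonneg ξ, norm_nonneg (η - ξ)]

lemma shift_decay (S : 𝓢(R2, ℂ)) : ∃ C > 0, ∀ η ξ,
    ‖S (η - ξ)‖ ≤ C * (1 + ‖ξ‖) ^ 3 * ((1 + ‖η‖) ^ 3)⁻¹ := by
  obtain ⟨C, hC, h⟩ := schwartz_decay S 3
  refine ⟨C, hC, fun η ξ => (h _).trans ?_⟩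
  rw [mul_assoc]
  gcongr
  rw [← div_eq_mul_inv, le_div_iff₀ (by positivity), inv_mul_le_iff₀ (by positivity), ← mul_pow]
  gcongr
  exact one_add_norm_sub ξ η

lemma cut_cont (χ : 𝓢(R2, ℂ)) {ψ : R2 → ℂ} (hψ : TG ψ) : Continuous (cut χ ψ) := by
  apply continuous_const.mul
  rw [continuous_iff_continuousAt]
  intro ξ0
  obtain ⟨C, hC, h⟩ := shift_decay (tS χ)
  simp_rw [← tS_apply]
  have hc := (tS χ).continuous
  apply continuousAt_of_dominated
    (bound := fun η => C * (2 + ‖ξ0‖) ^ 3 * ‖ψ η * ((((1 + ‖η‖) ^ 3)⁻¹ : ℝ) : ℂ)‖)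
  · refine Eventually.of_forall fun ξ => hψ.aesm.mul ?_
    apply Continuous.aestronglyMeasurable; fun_prop
  · filter_upwards [Metric.ball_mem_nhds ξ0 one_pos] with ξ hξ
    refine Eventually.of_forall fun η => ?_
    rw [norm_mul, norm_mul, Complex.norm_real,
      Real.norm_of_nonneg (by positivity : (0:ℝ) ≤ ((1 + ‖η‖) ^ 3)⁻¹)]
    have h1 : ‖ξ‖ ≤ 1 + ‖ξ0‖ := by
      have := norm_add_le (ξ - ξ0) ξ0
      rw [sub_add_cancel] at this
      linarith [mem_ball_iff_norm.1 hξ]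
    calc ‖ψ η‖ * ‖tS χ (η - ξ)‖ ≤ ‖ψ η‖ * (C * (1 + ‖ξ‖) ^ 3 * ((1 + ‖η‖) ^ 3)⁻¹) := by
          gcongr; exact h η ξ
      _ ≤ ‖ψ η‖ * (C * (2 + ‖ξ0‖) ^ 3 * ((1 + ‖η‖) ^ 3)⁻¹) := by
          gcongr ‖ψ η‖ * (C * ?_ ^ 3 * _); linarith
      _ = _ := by ring
  · exact hψ.norm.const_mul _
  · refine Eventually.of_forall fun η => ?_
    apply Continuous.continuousAt; fun_prop

lemma cut_pair (χ φ : 𝓢(R2, ℂ)) {ψ : R2 → ℂ} (hψ : TG ψ) :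
    ∫ ξ, cut χ ψ ξ * testFT φ ξ = ∫ η, ψ η * testFT (fun x => χ x * φ x) η := by
  obtain ⟨C, hC, h⟩ := shift_decay (tS χ)
  have hc := (tS χ).continuous
  have hc' := (tS φ).continuous
  have hIntg : Integrable (fun p : R2 × R2 => ψ p.2 * tS χ (p.2 - p.1) * tS φ p.1)
      (volume.prod volume) := by
    have h1 : Integrable (fun ξ : R2 => (1 + ‖ξ‖) ^ 3 * ‖tS φ ξ‖) := by
      obtain ⟨D, hD, hd⟩ := schwartz_decay (tS φ) 6
      refine (int_weight.const_mul D).mono (by apply Continuous.aestronglyMeasurable; fun_prop)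
        (Eventually.of_forall fun ξ => ?_)
      rw [Real.norm_of_nonneg (by positivity), Real.norm_of_nonneg (by positivity)]
      calc (1 + ‖ξ‖) ^ 3 * ‖tS φ ξ‖ ≤ (1 + ‖ξ‖) ^ 3 * (D * ((1 + ‖ξ‖) ^ 6)⁻¹) := by
            gcongr; exact hd ξ
        _ = _ := by field_simp
    have h2 := (h1.const_mul C).mul_prod hψ.norm
    refine h2.mono ?_ (Eventually.of_forall fun p => ?_)
    · refine ((hψ.aesm.comp_snd).mul ?_).mul ?_
      · apply Continuous.aestronglyMeasurable; fun_prop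
      · apply Continuous.aestronglyMeasurable; fun_prop
    · rw [norm_mul, norm_mul, Real.norm_of_nonneg (by positivity), norm_mul, Complex.norm_real,
        Real.norm_of_nonneg (by positivity : (0:ℝ) ≤ ((1 + ‖p.2‖) ^ 3)⁻¹)]
      calc ‖ψ p.2‖ * ‖tS χ (p.2 - p.1)‖ * ‖tS φ p.1‖
          ≤ ‖ψ p.2‖ * (C * (1 + ‖p.1‖) ^ 3 * ((1 + ‖p.2‖) ^ 3)⁻¹) * ‖tS φ p.1‖ := by
            gcongr; exact h _ _
        _ = _ := by ring
  have hpi : (π : ℂ) ≠ 0 := by exact_mod_cast Real.pi_ne_zero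
  calc ∫ ξ, cut χ ψ ξ * testFT φ ξ
      = ((((2 * π) ^ 2)⁻¹ : ℝ) : ℂ) * ∫ ξ, ∫ η, ψ η * tS χ (η - ξ) * tS φ ξ := by
        rw [← integral_const_mul]
        congr 1; ext ξ
        simp only [cut, ← tS_apply]
        rw [integral_mul_const, mul_assoc]
    _ = ((((2 * π) ^ 2)⁻¹ : ℝ) : ℂ) * ∫ η, ∫ ξ, ψ η * tS χ (η - ξ) * tS φ ξ := by
        rw [integral_integral_swap hIntg]
    _ = _ := by
        rw [← integral_const_mul]
        congr 1; ext η
        simp only [tS_apply, mul_assoc]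
        rw [integral_const_mul, conv_testFT]
        push_cast
        field_simp

lemma real_cs {f s : R2 → ℝ} (hs : ∀ x, 0 ≤ s x) (h0 : Integrable s)
    (h1 : Integrable (fun x => f x * s x)) (h2 : Integrable (fun x => f x ^ 2 * s x)) :
    (∫ x, f x * s x) ^ 2 ≤ (∫ x, f x ^ 2 * s x) * ∫ x, s x := by
  have := discrim_le_zero (a := ∫ x, f x ^ 2 * s x) (b := -2 * ∫ x, f x * s x) (c := ∫ x, s x) ?_
  · rw [discrim] at this; nlinarith
  · intro t
    have e : (∫ x, f x ^ 2 * s x) * (t * t) + -2 * (∫ x, f x * s x) * t + ∫ x, s x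
        = ∫ x, (t * f x - 1) ^ 2 * s x := by
      have : ∀ x, (t * f x - 1) ^ 2 * s x =
          (t * t) * (f x ^ 2 * s x) + (-2 * t) * (f x * s x) + s x := fun x => by ring
      simp_rw [this]
      rw [integral_add (by exact (h2.const_mul _).add (h1.const_mul _)) h0,
        integral_add (h2.const_mul _) (h1.const_mul _), integral_const_mul, integral_const_mul]
      ring
    rw [e]
    exact integral_nonneg fun x => mul_nonneg (sq_nonneg _) (hs x)

lemma cut_mem (χ : 𝓢(R2, ℂ)) {ψ : R2 → ℂ} (hψ : MemHs (-(1/2)) ψ) :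
    MemHs (-(1/2)) (cut χ ψ) := by
  have htg := hψ.tg
  have hcont := cut_cont χ htg
  rw [memHs_iff] at hψ ⊢
  refine ⟨hcont.aestronglyMeasurable, ?_⟩
  set S := tS χ with hS
  have hSc := S.continuous
  set p : R2 → ℝ := fun η => (1 + ‖η‖)⁻¹ * ‖ψ η‖ ^ 2 with hp
  set q : R2 → ℝ := fun ζ => (1 + ‖ζ‖) * ‖S (-ζ)‖ with hq
  have hqc : Continuous q := by fun_prop
  obtain ⟨C, hC, h⟩ := schwartz_decay S 4
  have hqb : ∀ ζ, q ζ ≤ C * ((1 + ‖ζ‖) ^ 3)⁻¹ := by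
    intro ζ
    calc (1 + ‖ζ‖) * ‖S (-ζ)‖ ≤ (1 + ‖ζ‖) * (C * ((1 + ‖-ζ‖) ^ 4)⁻¹) := by
          gcongr; exact h _
      _ = _ := by rw [norm_neg]; field_simp
  have hq0 : ∀ ζ, 0 ≤ q ζ := fun ζ => by positivity
  have hqi : Integrable q := by
    refine (int_weight.const_mul C).mono hqc.aestronglyMeasurable (Eventually.of_forall fun ξ => ?_)
    rw [Real.norm_of_nonneg (hq0 _), Real.norm_of_nonneg (by positivity)]
    exact hqb ξ
  have hqC : ∀ ζ, q ζ ≤ C := by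
    intro ζ
    refine (hqb ζ).trans (mul_le_of_le_one_right hC.le ?_)
    apply inv_le_one_of_one_le₀
    apply one_le_pow₀; linarith [norm_nonneg ζ]
  have hpi : Integrable p := hψ.2
  have hconv : Integrable (fun ξ => ∫ η, p η * q (ξ - η)) := by
    have := hpi.integrable_convolution (ContinuousLinearMap.mul ℝ ℝ) hqi
    exact this
  have hpq : ∀ ξ, Integrable (fun η => p η * q (ξ - η)) := by
    intro ξ
    have := hpi.bdd_mul (c := C) (f := fun η => q (ξ - η))
      (by apply Continuous.aestronglyMeasurable; fun_prop)
      (Eventually.of_forall fun η => by rw [Real.norm_of_nonneg (hq0 _)]; exact hqC _)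
    exact this.congr (Eventually.of_forall fun η => mul_comm _ _)
  set c : ℝ := ((2 * π) ^ 2)⁻¹ with hc
  have hSi : Integrable (fun η => ‖S η‖) := S.integrable.norm
  refine ((hconv.const_mul (∫ η, ‖S η‖)).const_mul (c ^ 2)).mono ?_
    (Eventually.of_forall fun ξ => ?_)
  · apply Continuous.aestronglyMeasurable
    apply Continuous.mul _ (by fun_prop)
    apply Continuous.inv₀ (by fun_prop); intro x; positivity
  have hI0 : 0 ≤ ∫ η, ‖S η‖ := integral_nonneg fun _ => norm_nonneg _
  have hpq0 : 0 ≤ ∫ η, p η * q (ξ - η) := integral_nonneg fun η => by positivity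
  rw [Real.norm_of_nonneg (by positivity), Real.norm_of_nonneg (by positivity)]
  have hSx : Integrable (fun η => ‖S (η - ξ)‖) := hSi.comp_sub_right ξ
  have hSe : ∫ η, ‖S (η - ξ)‖ = ∫ η, ‖S η‖ := integral_sub_right_eq_self (fun η => ‖S η‖) ξ
  obtain ⟨C', hC', h'⟩ := shift_decay S
  have i1 : Integrable (fun η => ‖ψ η‖ * ‖S (η - ξ)‖) := by
    have := (htg.int_of_bound (g := fun η => S (η - ξ))
      (by apply Continuous.aestronglyMeasurable; fun_prop) _ (fun η => h' η ξ)).norm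
    simpa only [norm_mul] using this
  have bd : ∀ η, ‖ψ η‖ ^ 2 * ‖S (η - ξ)‖ ≤ (1 + ‖ξ‖) * (p η * q (ξ - η)) := by
    intro η
    have e : p η * q (ξ - η) = (1 + ‖η‖)⁻¹ * ‖ψ η‖ ^ 2 * ((1 + ‖η - ξ‖) * ‖S (η - ξ)‖) := by
      simp only [hp, hq, neg_sub, norm_sub_rev ξ η]
    rw [e]
    have := one_add_norm_sub ξ η
    have h3 : 1 ≤ (1 + ‖ξ‖) * (1 + ‖η‖)⁻¹ * (1 + ‖η - ξ‖) := by
      rw [mul_right_comm, ← div_eq_mul_inv, le_div_iff₀ (by positivity)]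
      linarith
    calc ‖ψ η‖ ^ 2 * ‖S (η - ξ)‖ = 1 * (‖ψ η‖ ^ 2 * ‖S (η - ξ)‖) := by ring
      _ ≤ (1 + ‖ξ‖) * (1 + ‖η‖)⁻¹ * (1 + ‖η - ξ‖) * (‖ψ η‖ ^ 2 * ‖S (η - ξ)‖) := by gcongr
      _ = _ := by ring
  have i2 : Integrable (fun η => ‖ψ η‖ ^ 2 * ‖S (η - ξ)‖) := by
    refine ((hpq ξ).const_mul (1 + ‖ξ‖)).mono ((hψ.1.norm.pow 2).mul hSx.1)
      (Eventually.of_forall fun η => ?_)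
    rw [Real.norm_of_nonneg (by positivity)]
    exact (bd η).trans (le_abs_self _)
  have cs := real_cs (fun η => norm_nonneg (S (η - ξ))) hSx i1 i2
  have b1 : ‖cut χ ψ ξ‖ ≤ c * ∫ η, ‖ψ η‖ * ‖S (η - ξ)‖ := by
    rw [cut, norm_mul, Complex.norm_real, Real.norm_of_nonneg (by positivity)]
    gcongr
    refine (norm_integral_le_integral_norm _).trans (le_of_eq ?_)
    congr 1; ext η
    rw [norm_mul, hS, tS_apply]
  have b2 : ∫ η, ‖ψ η‖ ^ 2 * ‖S (η - ξ)‖ ≤ (1 + ‖ξ‖) * ∫ η, p η * q (ξ - η) := by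
    rw [← integral_const_mul]
    exact integral_mono i2 ((hpq ξ).const_mul _) bd
  have hQ0 : 0 ≤ ∫ η, ‖ψ η‖ * ‖S (η - ξ)‖ := integral_nonneg fun η => by positivity
  rw [inv_mul_le_iff₀ (by positivity)]
  calc ‖cut χ ψ ξ‖ ^ 2 ≤ (c * ∫ η, ‖ψ η‖ * ‖S (η - ξ)‖) ^ 2 := by gcongr
    _ = c ^ 2 * (∫ η, ‖ψ η‖ * ‖S (η - ξ)‖) ^ 2 := by ring
    _ ≤ c ^ 2 * ((∫ η, ‖ψ η‖ ^ 2 * ‖S (η - ξ)‖) * ∫ η, ‖S (η - ξ)‖) := by gcongr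
    _ ≤ c ^ 2 * (((1 + ‖ξ‖) * ∫ η, p η * q (ξ - η)) * ∫ η, ‖S η‖) := by
        rw [hSe]; gcongr
    _ = _ := by ring

/-- modulus of the symbol -/
def ww (k : ℝ) (ξ : R2) : ℝ := (2 * √|k ^ 2 - ‖ξ‖ ^ 2|)⁻¹

/-- phase of the symbol -/
def sg (k : ℝ) (ξ : R2) : ℂ := if ‖ξ‖ < k then Complex.I else 1

lemma mT_eq (k : ℝ) (hk : 0 < k) (ξ : R2) : mT k ξ = sg k ξ * (ww k ξ : ℂ) := by
  unfold mT sg ww rootk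
  split_ifs with h
  · have : 0 ≤ k ^ 2 - ‖ξ‖ ^ 2 := by nlinarith [norm_nonneg ξ]
    rw [abs_of_nonneg this]
    push_cast
    rw [div_eq_mul_inv]
  · have : k ^ 2 - ‖ξ‖ ^ 2 ≤ 0 := by nlinarith [norm_nonneg ξ]
    rw [abs_of_nonpos this, neg_sub]
    push_cast
    rw [one_mul, mul_left_comm, ← div_div, div_self Complex.I_ne_zero, one_div]

lemma ww_nonneg (k : ℝ) (ξ : R2) : 0 ≤ ww k ξ := by unfold ww; positivity

lemma ww_meas (k : ℝ) : Measurable (ww k) := by unfold ww; fun_prop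

lemma sg_meas (k : ℝ) : Measurable (sg k) := by
  unfold sg
  exact Measurable.ite (measurableSet_lt (by fun_prop) (by fun_prop)) measurable_const
    measurable_const

lemma sg_norm (k : ℝ) (ξ : R2) : ‖sg k ξ‖ = 1 := by unfold sg; split_ifs <;> simp

lemma ae_ne (k : ℝ) (hk : 0 < k) : ∀ᵐ ξ : R2, ‖ξ‖ ≠ k := by
  have := Measure.addHaar_sphere_of_ne_zero (volume : Measure R2) 0 hk.ne'
  rw [ae_iff]
  convert this using 2
  ext; simp

lemma root_pos {k : ℝ} (hk : 0 < k) {ξ : R2} (h : ‖ξ‖ ≠ k) : 0 < √|k ^ 2 - ‖ξ‖ ^ 2| := by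
  apply Real.sqrt_pos.2
  apply abs_pos.2
  intro h2
  apply h
  rw [sub_eq_zero, sq_eq_sq₀ hk.le (norm_nonneg _)] at h2
  exact h2.symm

lemma root_le {k : ℝ} (hk : 0 < k) (ξ : R2) : √|k ^ 2 - ‖ξ‖ ^ 2| ≤ (1 + k) * (1 + ‖ξ‖) := by
  apply Real.sqrt_le_iff.2 ⟨by positivity, ?_⟩
  have : 0 ≤ ‖ξ‖ := norm_nonneg ξ
  have h1 : k + ‖ξ‖ ≤ (1 + k) * (1 + ‖ξ‖) := by nlinarith
  have : |k ^ 2 - ‖ξ‖ ^ 2| ≤ (k + ‖ξ‖) ^ 2 := by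
    rw [abs_le]; constructor <;> nlinarith
  exact this.trans (by gcongr)

lemma ww_pos {k : ℝ} (hk : 0 < k) {ξ : R2} (h : ‖ξ‖ ≠ k) : 0 < ww k ξ := by
  have := root_pos hk h
  unfold ww; positivity

lemma ww_lower {k : ℝ} (hk : 0 < k) {ξ : R2} (h : ‖ξ‖ ≠ k) :
    (1 + ‖ξ‖)⁻¹ ≤ 2 * (1 + k) * ww k ξ := by
  have h0 := root_pos hk h
  unfold ww
  rw [← div_eq_mul_inv, inv_eq_one_div, div_le_div_iff₀ (by positivity) (by positivity)]
  nlinarith [root_le hk ξ]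

lemma ww_inv_le {k : ℝ} (hk : 0 < k) (ξ : R2) :
    (ww k ξ)⁻¹ ≤ 2 * (1 + k) * (1 + ‖ξ‖) := by
  unfold ww
  rw [inv_inv]
  nlinarith [root_le hk ξ]

lemma ww_upper {k : ℝ} (hk : 0 < k) {ξ : R2} (h : 2 * k ≤ ‖ξ‖) :
    ww k ξ ≤ (1 + (2 * k)⁻¹) * (1 + ‖ξ‖)⁻¹ := by
  have hx : 0 < ‖ξ‖ := by linarith
  have h1 : ‖ξ‖ / 2 ≤ √|k ^ 2 - ‖ξ‖ ^ 2| := by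
    apply Real.le_sqrt_of_sq_le
    rw [abs_of_nonpos (by nlinarith)]
    nlinarith
  have h2 : ww k ξ ≤ ‖ξ‖⁻¹ := by
    unfold ww
    apply inv_anti₀ hx; linarith
  refine h2.trans ?_
  rw [← div_eq_mul_inv, le_div_iff₀ (by positivity), inv_mul_le_iff₀ hx]
  have : 1 ≤ ‖ξ‖ * (2 * k)⁻¹ := by
    rw [← div_eq_mul_inv, le_div_iff₀ (by positivity)]; linarith
  nlinarith

lemma ww_intOn {k : ℝ} (hk : 0 < k) : IntegrableOn (ww k) (Metric.ball 0 (2 * k)) := by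
  have h0 : IntegrableOn (fun y : ℝ => |y| ^ (-(1/2) : ℝ)) (Metric.ball 0 k) := by
    apply integrableOn_ball_of_norm_le_rpow (C := 1) (α := 1/2) (by simp) (by simp; norm_num)
    · refine Eventually.of_forall fun y => ?_
      rw [Real.norm_of_nonneg (by positivity), one_mul, Real.norm_eq_abs]
    · apply Measurable.aestronglyMeasurable; fun_prop
  have h1 : IntegrableOn (fun y : ℝ => |y - k| ^ (-(1/2) : ℝ)) (Set.Ioo 0 (2 * k)) := by
    rw [← integrable_indicator_iff Metric.isOpen_ball.measurableSet] at h0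
    rw [← integrable_indicator_iff measurableSet_Ioo]
    refine (h0.comp_sub_right k).congr (Eventually.of_forall fun y => ?_)
    have e : y - k ∈ Metric.ball (0 : ℝ) k ↔ y ∈ Set.Ioo 0 (2 * k) := by
      rw [mem_ball_zero_iff, Real.norm_eq_abs, abs_lt, Set.mem_Ioo]
      constructor <;> rintro ⟨h1, h2⟩ <;> constructor <;> linarith
    by_cases h : y ∈ Set.Ioo 0 (2 * k)
    · simp only [Set.indicator_of_mem h, Set.indicator_of_mem (e.2 h)]
    · simp only [Set.indicator_of_notMem h, Set.indicator_of_notMem (fun h' => h (e.1 h'))]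
  have := (integrableOn_fun_norm_addHaar (volume : Measure R2)
    (f := fun r : ℝ => (2 * √|k ^ 2 - r ^ 2|)⁻¹) (r := 2 * k)).2 ?_
  · exact this
  · refine (h1.const_mul (√k)).mono (by apply Measurable.aestronglyMeasurable; fun_prop) ?_
    refine (ae_restrict_iff' measurableSet_Ioo).2 (Eventually.of_forall fun y hy => ?_)
    obtain ⟨hy0, hy1⟩ := hy
    have hf : Module.finrank ℝ R2 - 1 = 1 := by simp
    rw [hf, pow_one, smul_eq_mul, Real.norm_of_nonneg (by positivity),
      Real.norm_of_nonneg (by positivity)]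
    have e : |k ^ 2 - y ^ 2| = |y - k| * (y + k) := by
      have e1 : |y + k| = y + k := abs_of_pos (by linarith)
      rw [abs_sub_comm, ← e1, ← abs_mul]
      congr 1; ring
    rw [e, Real.sqrt_mul (abs_nonneg _), Real.rpow_neg (abs_nonneg _), ← Real.sqrt_eq_rpow,
      mul_inv, mul_inv]
    have h3 : y * (2⁻¹ * (√(y + k))⁻¹) ≤ √k := by
      have hs : √k ≤ √(y + k) := Real.sqrt_le_sqrt (by linarith)
      have hk0 : 0 < √k := Real.sqrt_pos.2 hk
      have hq : √k * √k = k := Real.mul_self_sqrt hk.le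
      have : 0 < √(y + k) := Real.sqrt_pos.2 (by linarith)
      rw [← mul_assoc, ← div_eq_mul_inv, div_le_iff₀ this]
      nlinarith
    calc y * (2⁻¹ * ((√|y - k|)⁻¹ * (√(y + k))⁻¹))
        = (y * (2⁻¹ * (√(y + k))⁻¹)) * (√|y - k|)⁻¹ := by ring
      _ ≤ _ := by gcongr

lemma ww_int {k : ℝ} (hk : 0 < k) {ψ : R2 → ℂ} (hψ : MemHs (-(1/2)) ψ) (hc : Continuous ψ) :
    Integrable (fun ξ => ww k ξ * ‖ψ ξ‖ ^ 2) := by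
  obtain ⟨-, h2⟩ := memHs_iff.1 hψ
  obtain ⟨M, hM⟩ := (isCompact_closedBall (0 : R2) (2 * k)).exists_bound_of_continuousOn
    hc.continuousOn
  have hw := (integrable_indicator_iff (μ := (volume : Measure R2))
    Metric.isOpen_ball.measurableSet).2 (ww_intOn hk)
  refine ((h2.const_mul (1 + (2 * k)⁻¹)).add (hw.const_mul (M ^ 2))).mono
    ((ww_meas k).aestronglyMeasurable.mul (by apply Continuous.aestronglyMeasurable; fun_prop))
    (Eventually.of_forall fun ξ => ?_)
  have hw0 := ww_nonneg k ξ
  rw [Real.norm_of_nonneg (by positivity)]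
  refine le_trans ?_ (le_abs_self _)
  simp only [Pi.add_apply]
  by_cases h : ‖ξ‖ < 2 * k
  · have hm : ξ ∈ Metric.ball (0 : R2) (2 * k) := by simpa using h
    rw [Set.indicator_of_mem hm]
    have hb := hM ξ (Metric.ball_subset_closedBall hm)
    have : ww k ξ * ‖ψ ξ‖ ^ 2 ≤ M ^ 2 * ww k ξ := by
      rw [mul_comm]; gcongr
    have : 0 ≤ (1 + (2 * k)⁻¹) * ((1 + ‖ξ‖)⁻¹ * ‖ψ ξ‖ ^ 2) := by positivity
    linarith
  · have hm : ξ ∉ Metric.ball (0 : R2) (2 * k) := by simpa using h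
    rw [Set.indicator_of_notMem hm, mul_zero, add_zero, ← mul_assoc]
    gcongr
    exact ww_upper hk (not_lt.1 h)

section abstract_lax

variable {H : Type*} [NormedAddCommGroup H] [InnerProductSpace ℂ H]

lemma lax_bound (V : Submodule ℂ H) (M : H →L[ℂ] H)
    (hM : ∀ u, ‖u‖ ^ 2 ≤ 2 * ‖inner ℂ u (M u)‖) (f u : H) (hu : u ∈ V)
    (h : ∀ v ∈ V, inner ℂ v (M u - f) = 0) : ‖u‖ ≤ 2 * ‖f‖ := by
  have h1 := h u hu
  rw [inner_sub_right, sub_eq_zero] at h1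
  have h2 := hM u
  rw [h1] at h2
  have h3 : ‖inner ℂ u f‖ ≤ ‖u‖ * ‖f‖ := norm_inner_le_norm u f
  by_contra hc
  push Not at hc
  have : 0 ≤ ‖f‖ := norm_nonneg f
  nlinarith

lemma lax_exists [CompleteSpace H] (V : Submodule ℂ H) (hV : IsClosed (V : Set H)) (M : H →L[ℂ] H)
    (hM : ∀ u, ‖u‖ ^ 2 ≤ 2 * ‖inner ℂ u (M u)‖) (f : H) :
    ∃ u ∈ V, ∀ v ∈ V, inner ℂ v (M u - f) = 0 := by
  have : CompleteSpace V := hV.completeSpace_coe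
  let A : V →L[ℂ] V := V.orthogonalProjectionOnto.comp (M.comp V.subtypeL)
  have hA : ∀ u v : V, inner ℂ v (A u) = inner ℂ (v : H) (M u) := by
    intro u v
    simp [A]
  have hlow : ∀ u : V, ‖u‖ ≤ 2 * ‖A u‖ := by
    intro u
    have h1 := hM u
    rw [← hA] at h1
    have h3 : ‖inner ℂ u (A u)‖ ≤ ‖u‖ * ‖A u‖ := norm_inner_le_norm u (A u)
    have e : ‖(u : H)‖ = ‖u‖ := rfl
    rw [e] at h1
    by_contra hc
    push Not at hc
    have : 0 ≤ ‖A u‖ := norm_nonneg _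
    nlinarith
  have hanti : AntilipschitzWith 2 A := by
    apply A.antilipschitz_of_bound
    simpa using hlow
  have hcl : IsClosed (Set.range A) := hanti.isClosed_range A.uniformContinuous
  have htop : A.range = ⊤ := by
    have hc2 : IsClosed (A.range : Set V) := by
      have : (A.range : Set V) = Set.range A := by ext; simp
      rw [this]; exact hcl
    have : CompleteSpace A.range := hc2.completeSpace_coe
    rw [← Submodule.orthogonal_eq_bot_iff]
    rw [Submodule.eq_bot_iff]
    intro v hv
    have h1 := Submodule.inner_left_of_mem_orthogonal (LinearMap.mem_range_self A.toLinearMap v) hv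
    have h2 := hM v
    have h3 : inner ℂ v (A v) = 0 := h1
    rw [← hA, h3] at h2
    have e : ‖(v : H)‖ = ‖v‖ := rfl
    rw [e] at h2
    have : ‖v‖ ^ 2 ≤ 0 := by simpa using h2
    have : ‖v‖ = 0 := by nlinarith [norm_nonneg v]
    exact norm_eq_zero.1 this
  have hm : V.orthogonalProjectionOnto f ∈ A.range := by rw [htop]; trivial
  obtain ⟨u, hu⟩ := hm
  refine ⟨u, u.2, fun v hv => ?_⟩
  have h1 := hA u ⟨v, hv⟩
  have h2 : A u = V.orthogonalProjectionOnto f := hu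
  rw [h2, Submodule.inner_orthogonalProjectionOnto_eq_of_mem_left] at h1
  rw [inner_sub_right, sub_eq_zero]
  exact h1.symm

end abstract_lax

/-- the Hilbert space -/
abbrev HH : Type := Lp ℂ 2 (volume : Measure R2)

lemma memLp_sgmul (k : ℝ) (u : HH) : MemLp (fun ξ => sg k ξ * u ξ) 2 (volume : Measure R2) := by
  refine (Lp.memLp u).of_le ((sg_meas k).aestronglyMeasurable.mul (Lp.aestronglyMeasurable u))
    (Eventually.of_forall fun ξ => ?_)
  rw [norm_mul, sg_norm, one_mul]

/-- multiplication by the phase -/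
def MM (k : ℝ) : HH →L[ℂ] HH :=
  LinearMap.mkContinuous
    { toFun := fun u => (memLp_sgmul k u).toLp _
      map_add' := fun u v => by
        apply Lp.ext
        filter_upwards [(memLp_sgmul k (u + v)).coeFn_toLp, Lp.coeFn_add u v,
          (memLp_sgmul k u).coeFn_toLp, (memLp_sgmul k v).coeFn_toLp,
          Lp.coeFn_add ((memLp_sgmul k u).toLp _) ((memLp_sgmul k v).toLp _)] with ξ h1 h2 h3 h4 h5
        rw [h1, h5, Pi.add_apply, h3, h4, h2, Pi.add_apply, mul_add]
      map_smul' := fun c u => by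
        apply Lp.ext
        filter_upwards [(memLp_sgmul k (c • u)).coeFn_toLp, Lp.coeFn_smul c u,
          (memLp_sgmul k u).coeFn_toLp,
          Lp.coeFn_smul c ((memLp_sgmul k u).toLp _)] with ξ h1 h2 h3 h5
        simp only [RingHom.id_apply]
        rw [h1, h5, Pi.smul_apply, h3, h2, Pi.smul_apply, smul_eq_mul, smul_eq_mul]
        ring } 1 (fun u => by
      rw [one_mul]
      apply Lp.norm_le_norm_of_ae_le
      filter_upwards [(memLp_sgmul k u).coeFn_toLp] with ξ h1
      simp only [LinearMap.coe_mk, AddHom.coe_mk]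
      rw [h1, norm_mul, sg_norm, one_mul])

lemma MM_ae (k : ℝ) (u : HH) : MM k u =ᵐ[volume] fun ξ => sg k ξ * u ξ :=
  (memLp_sgmul k u).coeFn_toLp

lemma MM_coer (k : ℝ) (u : HH) : ‖u‖ ^ 2 ≤ 2 * ‖inner ℂ u (MM k u)‖ := by
  have h1 : inner ℂ u u = (‖u‖ ^ 2 : ℂ) := inner_self_eq_norm_sq_to_K u
  have h2 : ‖u‖ ^ 2 = ((1 - Complex.I) * inner ℂ u (MM k u)).re := by
    have e1 : ‖u‖ ^ 2 = (inner ℂ u u : ℂ).re := by rw [h1]; norm_cast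
    rw [e1, L2.inner_def, L2.inner_def, ← integral_const_mul]
    have i1 : Integrable (fun a => inner ℂ (u a) (u a)) (volume : Measure R2) :=
      L2.integrable_inner (𝕜 := ℂ) u u
    have i2 : Integrable (fun a => inner ℂ (u a) (MM k u a)) (volume : Measure R2) :=
      L2.integrable_inner (𝕜 := ℂ) u (MM k u)
    have r1 := integral_re i1
    have r2 := integral_re (i2.const_mul (1 - Complex.I))
    simp only [RCLike.re_to_complex] at r1 r2
    rw [← r1, ← r2]
    apply integral_congr_ae
    filter_upwards [MM_ae k u] with ξ h
    rw [h]
    simp only [RCLike.inner_apply]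
    unfold sg
    split_ifs
    · simp; ring
    · simp; ring
  have h3 : ‖(1 - Complex.I : ℂ)‖ ≤ 2 := by
    refine (norm_sub_le _ _).trans ?_
    simp; norm_num
  rw [h2]
  calc _ ≤ ‖(1 - Complex.I) * inner ℂ u (MM k u)‖ := Complex.re_le_norm _
    _ = ‖(1 - Complex.I : ℂ)‖ * ‖inner ℂ u (MM k u)‖ := norm_mul _ _
    _ ≤ _ := by gcongr

/-- admissible test functions -/
def TF (Γ : Set R2) (φ : R2 → ℂ) : Prop :=
  ContDiff ℝ ∞ φ ∧ HasCompactSupport φ ∧ tsupport φ ⊆ Γ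

/-- generators -/
def IsGen (Γ : Set R2) (k : ℝ) (v : HH) : Prop :=
  ∃ φ, TF Γ φ ∧ v =ᵐ[volume] fun ξ => ((√(ww k ξ) : ℝ) : ℂ) * testFT φ (-ξ)

/-- energy space -/
def VV (Γ : Set R2) (k : ℝ) : Submodule ℂ HH :=
  (Submodule.span ℂ {v | IsGen Γ k v}).topologicalClosure

lemma VV_closed (Γ : Set R2) (k : ℝ) : IsClosed (VV Γ k : Set HH) :=
  Submodule.isClosed_topologicalClosure _

lemma gen_mem {Γ : Set R2} {k : ℝ} {v : HH} (h : IsGen Γ k v) : v ∈ VV Γ k :=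
  Submodule.le_topologicalClosure _ (Submodule.subset_span h)

lemma VV_perp {Γ : Set R2} {k : ℝ} {g : HH} (h : ∀ v, IsGen Γ k v → inner ℂ v g = 0) :
    ∀ v ∈ VV Γ k, inner ℂ v g = 0 := by
  have h1 : VV Γ k ≤ (Submodule.span ℂ {g})ᗮ := by
    apply Submodule.topologicalClosure_minimal
    · rw [Submodule.span_le]
      intro v hv
      rw [SetLike.mem_coe, Submodule.mem_orthogonal_singleton_iff_inner_left]
      exact h v hv
    · exact Submodule.isClosed_orthogonal _
  intro v hv
  exact Submodule.mem_orthogonal_singleton_iff_inner_left.1 (h1 hv)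

lemma mem_VV {Γ : Set R2} {k : ℝ} {u : HH}
    (h : ∀ g : HH, (∀ v, IsGen Γ k v → inner ℂ v g = 0) → inner ℂ u g = 0) : u ∈ VV Γ k := by
  unfold VV
  rw [← Submodule.orthogonal_orthogonal_eq_closure, Submodule.mem_orthogonal]
  intro g hg
  rw [inner_eq_zero_symm]
  apply h
  intro v hv
  exact Submodule.inner_right_of_mem_orthogonal (Submodule.subset_span hv) hg

lemma testFT_conj (φ : R2 → ℂ) (ξ : R2) :
    starRingEnd ℂ (testFT φ (-ξ)) = testFT (fun x => starRingEnd ℂ (φ x)) ξ := by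
  unfold testFT
  rw [← integral_conj]
  apply integral_congr_ae
  refine Eventually.of_forall fun x => ?_
  simp only [map_mul, ← Complex.exp_conj, Complex.conj_I, Complex.conj_ofReal, rdot_neg_right]
  push_cast
  congr 2
  ring

lemma TF.conj {Γ : Set R2} {φ : R2 → ℂ} (h : TF Γ φ) : TF Γ (fun x => starRingEnd ℂ (φ x)) := by
  obtain ⟨h1, h2, h3⟩ := h
  have e : Function.support (fun x => starRingEnd ℂ (φ x)) = Function.support φ := by
    ext x; simp
  have e2 : tsupport (fun x => starRingEnd ℂ (φ x)) = tsupport φ := by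
    unfold tsupport; rw [e]
  refine ⟨Complex.conjCLE.contDiff.comp h1, ?_, by rw [e2]; exact h3⟩
  unfold HasCompactSupport; rw [e2]; exact h2

/-- Schwartz function from a test function -/
lemma TF.schwartz {φ : R2 → ℂ} (h1 : ContDiff ℝ ∞ φ) (h2 : HasCompactSupport φ) :
    ∃ S : 𝓢(R2, ℂ), (S : R2 → ℂ) = φ := ⟨h2.toSchwartzMap h1, rfl⟩

lemma schwartz_memHs (S : 𝓢(R2, ℂ)) : MemHs (-(1/2)) S := by
  rw [memHs_iff]
  refine ⟨S.continuous.aestronglyMeasurable, ?_⟩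
  obtain ⟨C, hC, h⟩ := schwartz_decay S 3
  have hcont : Continuous (fun ξ : R2 => (1 + ‖ξ‖)⁻¹ * ‖S ξ‖ ^ 2) := by
    have : ∀ ξ : R2, 1 + ‖ξ‖ ≠ 0 := fun ξ => by positivity
    have := S.continuous
    fun_prop (disch := assumption)
  refine (int_weight.const_mul (C ^ 2)).mono hcont.aestronglyMeasurable
    (Eventually.of_forall fun ξ => ?_)
  rw [Real.norm_of_nonneg (by positivity), Real.norm_of_nonneg (by positivity)]
  have hn : 0 ≤ ‖ξ‖ := norm_nonneg _
  have a1 : (1 + ‖ξ‖)⁻¹ ≤ 1 := inv_le_one_of_one_le₀ (by linarith)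
  have a2 : ((1 + ‖ξ‖) ^ 3)⁻¹ ≤ 1 := inv_le_one_of_one_le₀ (one_le_pow₀ (by linarith))
  have a3 : ‖S ξ‖ ^ 2 ≤ (C * ((1 + ‖ξ‖) ^ 3)⁻¹) ^ 2 := by gcongr; exact h ξ
  have a4 : (C * ((1 + ‖ξ‖) ^ 3)⁻¹) ^ 2 ≤ C ^ 2 * ((1 + ‖ξ‖) ^ 3)⁻¹ := by
    rw [mul_pow]
    gcongr
    have : 0 ≤ ((1 + ‖ξ‖) ^ 3)⁻¹ := by positivity
    nlinarith
  calc _ ≤ 1 * ‖S ξ‖ ^ 2 := by gcongr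
    _ ≤ _ := by linarith

lemma memLp_sw {k : ℝ} (hk : 0 < k) {ψ : R2 → ℂ} (hψ : MemHs (-(1/2)) ψ) (hc : Continuous ψ) :
    MemLp (fun ξ => ((√(ww k ξ) : ℝ) : ℂ) * ψ ξ) 2 (volume : Measure R2) := by
  have hm : AEStronglyMeasurable (fun ξ => ((√(ww k ξ) : ℝ) : ℂ) * ψ ξ) (volume : Measure R2) := by
    have := ww_meas k
    refine AEStronglyMeasurable.mul ?_ hψ.1
    apply Measurable.aestronglyMeasurable
    fun_prop
  rw [memLp_two_iff_integrable_sq_norm hm]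
  refine (ww_int hk hψ hc).congr (Eventually.of_forall fun ξ => ?_)
  simp only [norm_mul, mul_pow, Complex.norm_real, Real.norm_eq_abs, sq_abs,
    Real.sq_sqrt (ww_nonneg k ξ)]

lemma gen_exists {Γ : Set R2} {k : ℝ} (hk : 0 < k) {φ : R2 → ℂ} (h : TF Γ φ) :
    ∃ v : HH, IsGen Γ k v ∧ v =ᵐ[volume] fun ξ => ((√(ww k ξ) : ℝ) : ℂ) * testFT φ (-ξ) := by
  obtain ⟨S, hS⟩ := TF.schwartz h.1 h.2.1
  have e : (fun ξ => testFT φ (-ξ)) = (rS (tS S) : R2 → ℂ) := by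
    funext ξ; rw [rS_apply, tS_apply, hS]
  have hL := memLp_sw hk (ψ := fun ξ => testFT φ (-ξ)) (by rw [e]; exact schwartz_memHs _)
    (by rw [e]; exact (rS (tS S)).continuous)
  exact ⟨hL.toLp _, ⟨φ, h, hL.coeFn_toLp⟩, hL.coeFn_toLp⟩

lemma gen_inner {k : ℝ} {φ : R2 → ℂ} {v : HH}
    (h : v =ᵐ[volume] fun ξ => ((√(ww k ξ) : ℝ) : ℂ) * testFT φ (-ξ)) {g : HH} {G : R2 → ℂ}
    (hg : g =ᵐ[volume] G) :
    inner ℂ v g = ∫ ξ, (((√(ww k ξ) : ℝ) : ℂ) * G ξ) * testFT (fun x => starRingEnd ℂ (φ x)) ξ := by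
  rw [L2.inner_def]
  apply integral_congr_ae
  filter_upwards [h, hg] with ξ h1 h2
  rw [h1, h2, RCLike.inner_apply, map_mul, testFT_conj, Complex.conj_ofReal]
  ring

lemma memLp_F {k : ℝ} (hk : 0 < k) {F : R2 → ℂ} (hF : MemHs (1/2) F) :
    MemLp (fun ξ => (((√(ww k ξ))⁻¹ : ℝ) : ℂ) * F ξ) 2 (volume : Measure R2) ∧
    ∀ ξ, ‖(((√(ww k ξ))⁻¹ : ℝ) : ℂ) * F ξ‖ ^ 2 ≤
      4 * (1 + k) * (((1 : ℝ) + ‖ξ‖ ^ 2) ^ (1/2 : ℝ) * ‖F ξ‖ ^ 2) := by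
  have hb : ∀ ξ, ‖(((√(ww k ξ))⁻¹ : ℝ) : ℂ) * F ξ‖ ^ 2 ≤
      4 * (1 + k) * (((1 : ℝ) + ‖ξ‖ ^ 2) ^ (1/2 : ℝ) * ‖F ξ‖ ^ 2) := by
    intro ξ
    rw [norm_mul, mul_pow, Complex.norm_real, Real.norm_eq_abs, sq_abs, inv_pow,
      Real.sq_sqrt (ww_nonneg k ξ), ← mul_assoc]
    gcongr
    have h1 := ww_inv_le hk ξ
    have h2 := le_J_half ξ
    nlinarith
  refine ⟨?_, hb⟩
  have hm : AEStronglyMeasurable (fun ξ => (((√(ww k ξ))⁻¹ : ℝ) : ℂ) * F ξ)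
      (volume : Measure R2) := by
    have := ww_meas k
    refine AEStronglyMeasurable.mul ?_ hF.1
    apply Measurable.aestronglyMeasurable
    fun_prop
  rw [memLp_two_iff_integrable_sq_norm hm]
  refine (hF.2.const_mul (4 * (1 + k))).mono (by fun_prop) (Eventually.of_forall fun ξ => ?_)
  rw [Real.norm_of_nonneg (by positivity)]
  exact (hb ξ).trans (le_abs_self _)

lemma agree_iff {Γ : Set R2} {k : ℝ} (hk : 0 < k) {F ψ : R2 → ℂ} {u f : HH}
    (hu : u =ᵐ[volume] fun ξ => ((√(ww k ξ) : ℝ) : ℂ) * ψ ξ)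
    (hf : f =ᵐ[volume] fun ξ => (((√(ww k ξ))⁻¹ : ℝ) : ℂ) * F ξ) :
    AgreeOn Γ (fun ξ => mT k ξ * ψ ξ) F ↔ ∀ v ∈ VV Γ k, inner ℂ v (MM k u - f) = 0 := by
  have key : (MM k u - f : HH) =ᵐ[volume] fun ξ => sg k ξ * (((√(ww k ξ) : ℝ) : ℂ) * ψ ξ) -
      (((√(ww k ξ))⁻¹ : ℝ) : ℂ) * F ξ := by
    filter_upwards [hu, hf, MM_ae k u, Lp.coeFn_sub (MM k u) f] with ξ h1 h2 h3 h4
    rw [h4, Pi.sub_apply, h3, h1, h2]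
  have key2 : ∀ φ : R2 → ℂ, ∫ ξ, (((√(ww k ξ) : ℝ) : ℂ) * (sg k ξ * (((√(ww k ξ) : ℝ) : ℂ) * ψ ξ) -
      (((√(ww k ξ))⁻¹ : ℝ) : ℂ) * F ξ)) * testFT φ ξ =
      ∫ ξ, (mT k ξ * ψ ξ - F ξ) * testFT φ ξ := by
    intro φ
    apply integral_congr_ae
    filter_upwards [ae_ne k hk] with ξ h
    have h1 : 0 < √(ww k ξ) := Real.sqrt_pos.2 (ww_pos hk h)
    have h2 : ((√(ww k ξ) : ℝ) : ℂ) * ((√(ww k ξ) : ℝ) : ℂ) = (ww k ξ : ℂ) := by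
      rw [← Complex.ofReal_mul, Real.mul_self_sqrt (ww_nonneg k ξ)]
    have h3 : ((√(ww k ξ) : ℝ) : ℂ) * (((√(ww k ξ))⁻¹ : ℝ) : ℂ) = 1 := by
      rw [← Complex.ofReal_mul, mul_inv_cancel₀ h1.ne', Complex.ofReal_one]
    rw [mT_eq k hk, ← h2]
    linear_combination (-F ξ * testFT φ ξ) * h3
  constructor
  · intro h
    apply VV_perp
    rintro v ⟨φ, hφ, hv⟩
    rw [gen_inner hv key, key2]
    exact h _ hφ.conj.1 hφ.conj.2.1 hφ.conj.2.2
  · intro h φ h1 h2 h3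
    obtain ⟨v, hv, hv2⟩ := gen_exists (Γ := Γ) hk (TF.conj ⟨h1, h2, h3⟩)
    have := h v (gen_mem hv)
    rw [gen_inner hv2 key, key2] at this
    simpa using this

/-- support condition on the Fourier side -/
def SuppIn (K : Set R2) (ψ : R2 → ℂ) : Prop :=
  ∀ φ : R2 → ℂ, ContDiff ℝ ∞ φ → HasCompactSupport φ →
    tsupport φ ∩ K = ∅ → (∫ ξ : R2, ψ ξ * testFT φ ξ) = 0

lemma parseval (S T : 𝓢(R2, ℂ)) :
    ∫ ξ, testFT S (-ξ) * testFT T ξ = ((2 * π) ^ 2 : ℝ) * ∫ x, S x * T x := by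
  have e : (fun ξ => testFT S (-ξ)) = (rS (tS S) : R2 → ℂ) := by
    funext ξ; rw [rS_apply, tS_apply]
  have h := testFT_flip (f := fun ξ => testFT S (-ξ)) (g := T)
    (by rw [e]; exact (rS (tS S)).integrable) T.integrable
  rw [h, ← integral_const_mul]
  apply integral_congr_ae
  refine Eventually.of_forall fun x => ?_
  simp only
  rw [testFT_refl (testFT S), testFT_testFT]
  ring

lemma schwartz_memHs_half (S : 𝓢(R2, ℂ)) : MemHs (1/2) S := by
  refine ⟨S.continuous.aestronglyMeasurable, ?_⟩
  obtain ⟨C, hC, h⟩ := schwartz_decay S 4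
  have hcont : Continuous (fun ξ : R2 => ((1 : ℝ) + ‖ξ‖ ^ 2) ^ (1/2 : ℝ) * ‖S ξ‖ ^ 2) := by
    have h1 : Continuous (fun ξ : R2 => ((1 : ℝ) + ‖ξ‖ ^ 2) ^ (1/2 : ℝ)) :=
      Continuous.rpow_const (by fun_prop) (fun ξ => Or.inl (by positivity))
    have := S.continuous
    fun_prop
  refine (int_weight.const_mul (C ^ 2)).mono hcont.aestronglyMeasurable
    (Eventually.of_forall fun ξ => ?_)
  rw [Real.norm_of_nonneg (by positivity), Real.norm_of_nonneg (by positivity)]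
  have hn : 0 ≤ ‖ξ‖ := norm_nonneg _
  have hp : 0 < 1 + ‖ξ‖ := by positivity
  have a2 : ((1 + ‖ξ‖) ^ 4)⁻¹ ≤ 1 := inv_le_one_of_one_le₀ (one_le_pow₀ (by linarith))
  have a3 : ‖S ξ‖ ^ 2 ≤ (C * ((1 + ‖ξ‖) ^ 4)⁻¹) ^ 2 := by gcongr; exact h ξ
  have a5 : (1 + ‖ξ‖) * ((1 + ‖ξ‖) ^ 4)⁻¹ = ((1 + ‖ξ‖) ^ 3)⁻¹ := by field_simp
  calc _ ≤ (1 + ‖ξ‖) * (C * ((1 + ‖ξ‖) ^ 4)⁻¹) ^ 2 := by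
        gcongr
        exact J_half_le ξ
    _ = C ^ 2 * ((1 + ‖ξ‖) ^ 3)⁻¹ * ((1 + ‖ξ‖) ^ 4)⁻¹ := by rw [← a5]; ring
    _ ≤ C ^ 2 * ((1 + ‖ξ‖) ^ 3)⁻¹ * 1 := by gcongr
    _ = _ := mul_one _

lemma cut_supp (χ : 𝓢(R2, ℂ)) {K : Set R2} {ψ : R2 → ℂ} (hψ : TG ψ)
    (hs : SuppIn K ψ) : SuppIn (K ∩ tsupport χ) (cut χ ψ) := by
  intro φ h1 h2 h3
  obtain ⟨S, rfl⟩ := TF.schwartz h1 h2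
  rw [cut_pair χ S hψ]
  apply hs
  · exact (χ.smooth ⊤).mul h1
  · exact h2.mul_left
  · have a1 : tsupport (fun x => χ x * S x) ⊆ tsupport χ := tsupport_mul_subset_left
    have a2 : tsupport (fun x => χ x * S x) ⊆ tsupport S := tsupport_mul_subset_right
    ext x
    simp only [Set.mem_inter_iff, Set.mem_empty_iff_false, iff_false, not_and]
    intro hx hK
    have : x ∈ tsupport S ∩ (K ∩ tsupport χ) := ⟨a2 hx, hK, a1 hx⟩
    rw [h3] at this
    exact this

lemma cut_sum {ι : Type*} (s : Finset ι) (χ : ι → 𝓢(R2, ℂ)) {K O : Set R2} (hO : IsOpen O)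
    (hKO : K ⊆ O) (h1 : ∀ x ∈ O, ∑ i ∈ s, χ i x = 1)
    {ψ : R2 → ℂ} (hψ : MemHs (-(1/2)) ψ) (hs : SuppIn K ψ) :
    (fun ξ => ∑ i ∈ s, cut (χ i) ψ ξ) =ᵐ[volume] ψ := by
  have htg : TG (fun ξ => ∑ i ∈ s, cut (χ i) ψ ξ - ψ ξ) := by
    unfold TG
    simp only [sub_mul, Finset.sum_mul]
    refine Integrable.sub ?_ hψ.tg
    exact integrable_finsetSum _ fun i _ => (cut_mem (χ i) hψ).tg
  have := tg_zero htg ?_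
  · filter_upwards [this] with ξ h
    simpa [sub_eq_zero] using h
  intro φ hφ1 hφ2
  obtain ⟨S, rfl⟩ := TF.schwartz hφ1 hφ2
  have hprod : ∀ i, ∃ P : 𝓢(R2, ℂ), (P : R2 → ℂ) = fun x => χ i x * S x := fun i =>
    TF.schwartz (((χ i).smooth ⊤).mul hφ1) hφ2.mul_left
  choose P hP using hprod
  have i1 : ∀ i ∈ s, Integrable (fun ξ => cut (χ i) ψ ξ * testFT S ξ) := fun i _ => by
    rw [← tS_coe]; exact (cut_mem (χ i) hψ).tg.int _
  have i2 : ∀ Q : 𝓢(R2, ℂ), Integrable (fun ξ => ψ ξ * testFT Q ξ) := fun Q => by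
    rw [← tS_coe]; exact hψ.tg.int _
  have e1 : ∫ ξ, (∑ i ∈ s, cut (χ i) ψ ξ - ψ ξ) * testFT S ξ =
      (∑ i ∈ s, ∫ ξ, cut (χ i) ψ ξ * testFT S ξ) - ∫ ξ, ψ ξ * testFT S ξ := by
    rw [← integral_finsetSum _ i1, ← integral_sub (integrable_finsetSum _ i1) (i2 S)]
    congr 1
    funext ξ
    rw [sub_mul, Finset.sum_mul]
  have e2 : (∑ i ∈ s, ∫ ξ, cut (χ i) ψ ξ * testFT S ξ) - ∫ ξ, ψ ξ * testFT S ξ =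
      ∫ ξ, ψ ξ * testFT (fun x => ∑ i ∈ s, χ i x * S x - S x) ξ := by
    have : ∀ i ∈ s, ∫ ξ, cut (χ i) ψ ξ * testFT S ξ = ∫ ξ, ψ ξ * testFT (P i) ξ := fun i _ => by
      rw [cut_pair _ _ hψ.tg, hP]
    rw [Finset.sum_congr rfl this, ← integral_finsetSum _ (fun i _ => i2 (P i)),
      ← integral_sub (integrable_finsetSum _ (fun i _ => i2 (P i))) (i2 S)]
    congr 1
    funext ξ
    have hE : ∀ Q : 𝓢(R2, ℂ), Integrable (fun x => Complex.exp (Complex.I * (rdot x ξ : ℂ)) * Q x) :=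
      fun Q => by
        refine Q.integrable.norm.mono' (by
          apply Continuous.aestronglyMeasurable
          have := continuous_rdot continuous_id (continuous_const (y := ξ))
          have := Q.continuous
          fun_prop) (Eventually.of_forall fun x => ?_)
        rw [norm_mul, norm_exp_rdot, one_mul]
    rw [← Finset.mul_sum, ← mul_sub]
    congr 1
    unfold testFT
    rw [← integral_finsetSum _ (fun i _ => hE (P i)),
      ← integral_sub (integrable_finsetSum _ (fun i _ => hE (P i))) (hE S)]
    congr 1
    funext x
    simp only [hP]
    rw [mul_sub, Finset.mul_sum]
  rw [e1, e2]
  apply hs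
  · exact (ContDiff.sum fun i _ => ((χ i).smooth ⊤).mul hφ1).sub hφ1
  · have : (fun x => ∑ i ∈ s, χ i x * S x - S x) = (fun x => ∑ i ∈ s, χ i x - 1) * S := by
      funext x
      simp only [Pi.mul_apply, sub_mul, Finset.sum_mul, one_mul]
    rw [this]
    exact hφ2.mul_left
  · have : Disjoint (tsupport (fun x => ∑ i ∈ s, χ i x * S x - S x)) O := by
      refine Disjoint.closure_left ?_ hO
      rw [Set.disjoint_left]
      intro x hx hxO
      apply hx
      simp only
      rw [← Finset.sum_mul, h1 x hxO]
      ring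
    exact Set.disjoint_iff_inter_eq_empty.1 (this.mono_right hKO)

lemma V_supp {Γ : Set R2} {k : ℝ} (hk : 0 < k) {u : HH} (hu : u ∈ VV Γ k) :
    SuppIn (closure Γ) (fun ξ => (((√(ww k ξ))⁻¹ : ℝ) : ℂ) * u ξ) := by
  intro φ h1 h2 h3
  obtain ⟨S, hS⟩ := TF.schwartz (φ := fun x => starRingEnd ℂ (φ x))
    (TF.conj (Γ := Set.univ) ⟨h1, h2, Set.subset_univ _⟩).1
    (TF.conj (Γ := Set.univ) ⟨h1, h2, Set.subset_univ _⟩).2.1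
  have e : (fun ξ => testFT S (-ξ)) = (rS (tS S) : R2 → ℂ) := by
    funext ξ; rw [rS_apply, tS_apply]
  have hL := (memLp_F hk (F := fun ξ => testFT S (-ξ)) (by rw [e]; exact schwartz_memHs_half _)).1
  have hg := hL.coeFn_toLp
  set g : HH := hL.toLp _
  have hz : ∀ v ∈ VV Γ k, inner ℂ v g = 0 := by
    apply VV_perp
    rintro v ⟨χ, hχ, hv⟩
    rw [gen_inner hv hg]
    obtain ⟨T, hT⟩ := TF.schwartz hχ.conj.1 hχ.conj.2.1
    have e2 : ∫ ξ, (((√(ww k ξ) : ℝ) : ℂ) * ((((√(ww k ξ))⁻¹ : ℝ) : ℂ) * testFT S (-ξ))) *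
        testFT (fun x => starRingEnd ℂ (χ x)) ξ = ∫ ξ, testFT S (-ξ) * testFT T ξ := by
      apply integral_congr_ae
      filter_upwards [ae_ne k hk] with ξ h
      have h1 : 0 < √(ww k ξ) := Real.sqrt_pos.2 (ww_pos hk h)
      have h3 : ((√(ww k ξ) : ℝ) : ℂ) * (((√(ww k ξ))⁻¹ : ℝ) : ℂ) = 1 := by
        rw [← Complex.ofReal_mul, mul_inv_cancel₀ h1.ne', Complex.ofReal_one]
      rw [← mul_assoc, h3, one_mul, hT]
    rw [e2, parseval]
    have : ∀ x, S x * T x = 0 := by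
      intro x
      rw [hS, hT]
      by_contra hne
      have hx1 : φ x ≠ 0 := fun h => hne (by simp [h])
      have hx2 : χ x ≠ 0 := fun h => hne (by simp [h])
      have : x ∈ tsupport φ ∩ closure Γ :=
        ⟨subset_tsupport _ hx1, subset_closure (hχ.2.2 (subset_tsupport _ hx2))⟩
      rw [h3] at this
      exact this
    simp [this]
  have hz2 := inner_eq_zero_symm.1 (hz u hu)
  rw [L2.inner_def] at hz2
  rw [← hz2]
  apply integral_congr_ae
  filter_upwards [hg] with ξ h
  rw [h, RCLike.inner_apply, map_mul, testFT_conj, Complex.conj_ofReal, hS]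
  simp only [Complex.conj_conj]
  ring

lemma exists_chi {K : Set R2} (hK : Bornology.IsBounded K) :
    ∃ χ : 𝓢(R2, ℂ), ∃ O, IsOpen O ∧ K ⊆ O ∧ ∀ x ∈ O, χ x = 1 := by
  obtain ⟨R, hR, h⟩ := hK.subset_ball_lt 0 0
  let b : ContDiffBump (0 : R2) := ⟨R, R + 1, hR, by linarith⟩
  have hc : HasCompactSupport (fun x => ((b x : ℝ) : ℂ)) :=
    b.hasCompactSupport.comp_left (g := fun t : ℝ => (t : ℂ)) (by simp)
  obtain ⟨S, hS⟩ := TF.schwartz (φ := fun x => ((b x : ℝ) : ℂ))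
    (Complex.ofRealCLM.contDiff.comp b.contDiff) hc
  refine ⟨S, Metric.ball 0 R, Metric.isOpen_ball, h, fun x hx => ?_⟩
  rw [hS]
  simp only
  rw [b.one_of_mem_closedBall (Metric.ball_subset_closedBall hx), Complex.ofReal_one]

lemma exists_elt {Γ : Set R2} (hΓ : Bornology.IsBounded Γ) {k : ℝ} (hk : 0 < k) {u : HH}
    (hu : u ∈ VV Γ k) : ∃ ψ : HTildeElt (-(1/2) : ℝ) Γ,
      u =ᵐ[volume] fun ξ => ((√(ww k ξ) : ℝ) : ℂ) * ψ.ft ξ := by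
  set ψ0 : R2 → ℂ := fun ξ => (((√(ww k ξ))⁻¹ : ℝ) : ℂ) * u ξ with hψ0
  have hs : SuppIn (closure Γ) ψ0 := V_supp hk hu
  have hm : MemHs (-(1/2)) ψ0 := by
    rw [memHs_iff]
    have hm0 : AEStronglyMeasurable ψ0 volume := by
      have := ww_meas k
      refine AEStronglyMeasurable.mul ?_ (Lp.aestronglyMeasurable u)
      apply Measurable.aestronglyMeasurable
      fun_prop
    refine ⟨hm0, ?_⟩
    have hu2 := (memLp_two_iff_integrable_sq_norm (Lp.aestronglyMeasurable u)).1 (Lp.memLp u)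
    refine (hu2.const_mul (2 * (1 + k))).mono
      (AEStronglyMeasurable.mul (by apply Measurable.aestronglyMeasurable; fun_prop)
        (by fun_prop)) ?_
    filter_upwards [ae_ne k hk] with ξ h
    rw [Real.norm_of_nonneg (by positivity), Real.norm_of_nonneg (by positivity), hψ0]
    simp only
    rw [norm_mul, mul_pow, Complex.norm_real, Real.norm_eq_abs, sq_abs, inv_pow,
      Real.sq_sqrt (ww_nonneg k ξ), ← mul_assoc]
    refine mul_le_mul_of_nonneg_right ?_ (sq_nonneg _)
    have h1 := ww_lower hk h
    have h2 := ww_pos hk h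
    rw [← div_eq_mul_inv, div_le_iff₀ h2]
    exact h1
  obtain ⟨χ, O, hO, hKO, h1⟩ := exists_chi (Metric.isBounded_closure_of_isBounded hΓ)
  have hcut := cut_sum (Finset.univ : Finset Unit) (fun _ => χ) hO hKO (by simpa using h1) hm hs
  simp only [Finset.univ_unique, Finset.sum_singleton] at hcut
  refine ⟨⟨cut χ ψ0, cut_cont χ hm.tg, (cut_mem χ hm).2, fun φ p1 p2 p3 => ?_⟩, ?_⟩
  · rw [← hs φ p1 p2 p3]
    apply integral_congr_ae
    filter_upwards [hcut] with ξ h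
    rw [h]
  · filter_upwards [hcut, ae_ne k hk] with ξ h h'
    have h1 : 0 < √(ww k ξ) := Real.sqrt_pos.2 (ww_pos hk h')
    have h3 : ((√(ww k ξ) : ℝ) : ℂ) * (((√(ww k ξ))⁻¹ : ℝ) : ℂ) = 1 := by
      rw [← Complex.ofReal_mul, mul_inv_cancel₀ h1.ne', Complex.ofReal_one]
    rw [h, hψ0]
    simp only
    rw [← mul_assoc, h3, one_mul]

lemma geom {Γ : Set R2} (hΓ : IsLipschitzDomain Γ) (x : R2) (hx : x ∈ closure Γ) :
    ∃ (U : Set R2) (v : R2) (δ : ℝ), IsOpen U ∧ x ∈ U ∧ Bornology.IsBounded U ∧ 0 < δ ∧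
      ∀ y ∈ closure Γ ∩ U, ∀ t, 0 < t → t < δ → y + t • v ∈ Γ := by
  obtain ⟨ho, hb, -, hl⟩ := hΓ
  by_cases hxΓ : x ∈ Γ
  · refine ⟨Γ, 0, 1, ho, hxΓ, hb, one_pos, fun y hy t _ _ => ?_⟩
    simpa using hy.2
  have hf : x ∈ frontier Γ := by rw [ho.frontier_eq]; exact ⟨hx, hxΓ⟩
  obtain ⟨e, L, f, U, hL, hU, hxU, hc⟩ := hl x hf
  obtain ⟨r, hr, hrU⟩ := Metric.isOpen_iff.1 hU x hxU
  have hLc := hL.continuous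
  refine ⟨Metric.ball x (r / 2), e.symm (EuclideanSpace.single 1 1), r / 2, Metric.isOpen_ball,
    Metric.mem_ball_self (by linarith), Metric.isBounded_ball, by linarith, ?_⟩
  rintro y ⟨hyc, hyb⟩ t ht0 ht1
  have hyU : y ∈ U := hrU (Metric.ball_subset_ball (by linarith) hyb)
  have hle : f (e y 0) ≤ e y 1 := by
    have hcl : IsClosed {z : R2 | f (e z 0) ≤ e z 1} := by
      apply isClosed_le
      · have : Continuous e := e.continuous
        fun_prop
      · have : Continuous e := e.continuous
        fun_prop
    have h1 : y ∈ closure (U ∩ Γ) := (hU.inter_closure ⟨hyU, hyc⟩)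
    refine closure_minimal ?_ hcl h1
    rintro z ⟨hzU, hzΓ⟩
    exact ((hc z hzU).1 hzΓ).le
  have hm : y + t • e.symm (EuclideanSpace.single 1 1) ∈ U := by
    apply hrU
    rw [Metric.mem_ball, dist_eq_norm] at *
    have : y + t • e.symm (EuclideanSpace.single 1 1) - x =
        (y - x) + t • e.symm (EuclideanSpace.single 1 1) := by abel
    rw [this]
    refine (norm_add_le _ _).trans_lt ?_
    rw [norm_smul, LinearIsometryEquiv.norm_map, Real.norm_of_nonneg ht0.le]
    simp
    linarith
  rw [hc _ hm]
  simp only [map_add, map_smul, LinearIsometryEquiv.apply_symm_apply]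
  simp
  linarith

lemma local_mem {Γ : Set R2} (hΓ : IsOpen Γ) {k : ℝ} {ψ : R2 → ℂ}
    (hψ : MemHs (-(1/2)) ψ) (hc : Continuous ψ) {K : Set R2} (hK : IsCompact K) (hs : SuppIn K ψ)
    {v : R2} {δ : ℝ} (hδ : 0 < δ) (hv : ∀ y ∈ K, ∀ t, 0 < t → t < δ → y + t • v ∈ Γ)
    {w : HH} (hw : w =ᵐ[volume] fun ξ => ((√(ww k ξ) : ℝ) : ℂ) * ψ ξ) (hk : 0 < k) :
    w ∈ VV Γ k := by
  apply mem_VV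
  intro g hg
  have step : ∀ n : ℕ, ∃ η : R2 → ℂ, (∀ ξ, ‖testFT η ξ‖ ≤ 1) ∧
      (∀ ξ, ‖testFT η ξ - 1‖ ≤ ((δ * (‖v‖ + 1)) * ‖ξ‖) * (1 / ((n : ℝ) + 1))) ∧
      Continuous (testFT η) ∧
      ∫ ξ, g ξ * starRingEnd ℂ (((√(ww k ξ) : ℝ) : ℂ) * ψ ξ * testFT η (-ξ)) = 0 := by
    intro n
    set t : ℝ := δ / (n + 2) with ht
    have hn : (0 : ℝ) ≤ n := Nat.cast_nonneg n
    have ht0 : 0 < t := by positivity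
    have ht1 : t < δ := by rw [ht, div_lt_iff₀ (by positivity)]; nlinarith
    have htn : t ≤ δ * (1 / ((n : ℝ) + 1)) := by
      rw [ht, div_eq_mul_one_div]; gcongr; linarith
    have hKc : IsCompact ((fun y => y + t • v) '' K) := hK.image (by fun_prop)
    obtain ⟨ε, hε, hεs⟩ := hKc.exists_cthickening_subset_open hΓ (by
      rintro _ ⟨y, hy, rfl⟩
      exact hv y hy t ht0 ht1)
    obtain ⟨η, e1, e2, e3, e4, e5⟩ := exists_bump (t • v) (min ε t) (lt_min hε ht0)
    obtain ⟨φ, f1, f2, f3, f4⟩ := mollify hψ.tg hc hK hs e1 e2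
    have hφ : TF Γ φ := by
      refine ⟨f1, f2, f3.trans ?_⟩
      rintro _ ⟨y, hy, z, hz, rfl⟩
      apply hεs
      refine Metric.mem_cthickening_of_dist_le _ (y + t • v) _ _ ⟨y, hy, rfl⟩ ?_
      have := e3 hz
      rw [Metric.mem_closedBall] at this
      simp only
      rw [dist_add_left]
      exact this.trans (min_le_left _ _)
    obtain ⟨u, hu1, hu2⟩ := gen_exists (Γ := Γ) hk hφ
    obtain ⟨S, hS⟩ := TF.schwartz e1 e2
    refine ⟨η, e4, fun ξ => (e5 ξ).trans ?_, ?_, ?_⟩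
    · rw [norm_smul, Real.norm_of_nonneg ht0.le]
      have : t * ‖v‖ + min ε t ≤ t * (‖v‖ + 1) := by
        have := min_le_right ε t
        linarith
      have h2 : t * (‖v‖ + 1) ≤ δ * (1 / ((n : ℝ) + 1)) * (‖v‖ + 1) := by gcongr
      calc _ ≤ (δ * (1 / ((n : ℝ) + 1)) * (‖v‖ + 1)) * ‖ξ‖ := by gcongr; linarith
        _ = _ := by ring
    · rw [← hS, ← tS_coe]; exact (tS S).continuous
    · rw [← hg u hu1, L2.inner_def]
      apply integral_congr_ae
      filter_upwards [hu2] with ξ h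
      rw [h, RCLike.inner_apply, f4, mul_assoc]
  choose η h1 h2 h3 h4 using step
  have hlim : Tendsto (fun n => ∫ ξ, g ξ * starRingEnd ℂ (((√(ww k ξ) : ℝ) : ℂ) * ψ ξ *
      testFT (η n) (-ξ))) atTop (𝓝 (∫ ξ, g ξ * starRingEnd ℂ (((√(ww k ξ) : ℝ) : ℂ) * ψ ξ))) := by
    have hmw : AEStronglyMeasurable (fun ξ => ((√(ww k ξ) : ℝ) : ℂ) * ψ ξ) volume :=
      (memLp_sw hk hψ hc).1
    have hgm : AEStronglyMeasurable g volume := Lp.aestronglyMeasurable g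
    apply tendsto_integral_of_dominated_convergence
      (fun ξ => ‖g ξ * starRingEnd ℂ (((√(ww k ξ) : ℝ) : ℂ) * ψ ξ)‖)
    · intro n
      have := h3 n
      refine hgm.mul (Complex.continuous_conj.comp_aestronglyMeasurable (hmw.mul ?_))
      apply Continuous.aestronglyMeasurable
      fun_prop
    · have : Integrable (fun ξ => inner ℂ (w ξ) (g ξ)) (volume : Measure R2) :=
        L2.integrable_inner (𝕜 := ℂ) w g
      refine this.norm.congr ?_
      filter_upwards [hw] with ξ h
      rw [h, RCLike.inner_apply]
    · intro n
      refine Eventually.of_forall fun ξ => ?_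
      rw [map_mul _ _ (testFT (η n) (-ξ)), ← mul_assoc, norm_mul, RCLike.norm_conj]
      exact mul_le_of_le_one_right (norm_nonneg _) (h1 n _)
    · refine Eventually.of_forall fun ξ => ?_
      have ht : Tendsto (fun n => testFT (η n) (-ξ)) atTop (𝓝 1) := by
        rw [tendsto_iff_norm_sub_tendsto_zero]
        refine squeeze_zero (fun _ => norm_nonneg _) (fun n => h2 n (-ξ)) ?_
        simpa using tendsto_one_div_add_atTop_nhds_zero_nat.const_mul (δ * (‖v‖ + 1) * ‖-ξ‖)
      have := ((Complex.continuous_conj.tendsto _).comp (ht.const_mul (((√(ww k ξ) : ℝ) : ℂ) * ψ ξ))).const_mul (g ξ)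
      rw [mul_one] at this
      exact this
  simp only [h4] at hlim
  have h0 := tendsto_nhds_unique hlim tendsto_const_nhds
  rw [L2.inner_def, ← h0]
  apply integral_congr_ae
  filter_upwards [hw] with ξ h
  rw [h, RCLike.inner_apply]

lemma coe_sum_ae {ι : Type*} (s : Finset ι) (w : ι → HH) :
    (∑ i ∈ s, w i : HH) =ᵐ[volume] fun ξ => ∑ i ∈ s, w i ξ := by
  classical
  induction s using Finset.induction_on with
  | empty =>
    simp only [Finset.sum_empty]
    exact Lp.coeFn_zero ℂ 2 (volume : Measure R2)
  | insert a s ha ih =>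
    rw [Finset.sum_insert ha]
    filter_upwards [Lp.coeFn_add (w a) (∑ i ∈ s, w i), ih] with ξ h1 h2
    rw [h1, Pi.add_apply, h2, Finset.sum_insert ha]

open scoped Manifold in
lemma pou {K : Set R2} (hK : IsCompact K) (U : R2 → Set R2) (hU : ∀ x ∈ K, IsOpen (U x))
    (hx : ∀ x ∈ K, x ∈ U x) (hb : ∀ x ∈ K, Bornology.IsBounded (U x)) :
    ∃ (s : Finset R2) (χ : R2 → 𝓢(R2, ℂ)) (O : Set R2), IsOpen O ∧ K ⊆ O ∧
      (∀ x ∈ s, x ∈ K ∧ HasCompactSupport (χ x) ∧ tsupport (χ x) ⊆ U x) ∧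
      ∀ y ∈ O, ∑ x ∈ s, χ x y = 1 := by
  obtain ⟨s, hsK, hs⟩ := hK.elim_nhds_subcover U (fun x h => (hU x h).mem_nhds (hx x h))
  obtain ⟨δ, hδ, hδs⟩ := hK.exists_cthickening_subset_open
    (isOpen_biUnion fun x hx => hU x (hsK x hx)) hs
  obtain ⟨f, hf⟩ := SmoothPartitionOfUnity.exists_isSubordinate 𝓘(ℝ, R2)
    (Metric.isClosed_cthickening (δ := δ) (E := K)) (fun i : s => U i)
    (fun i => hU i (hsK i i.2)) (by
      intro y hy
      obtain ⟨x, hx, hy2⟩ := Set.mem_iUnion₂.1 (hδs hy)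
      exact Set.mem_iUnion.2 ⟨⟨x, hx⟩, hy2⟩)
  have hS : ∀ i : s, ∃ S : 𝓢(R2, ℂ), (S : R2 → ℂ) = (fun x => ((f i x : ℝ) : ℂ)) ∧
      HasCompactSupport S ∧ tsupport S ⊆ U i := by
    intro i
    have hsub : tsupport (fun x => ((f i x : ℝ) : ℂ)) ⊆ tsupport (f i) := by
      apply closure_mono
      intro x hx h
      apply hx
      simp [h]
    have hsub2 : tsupport (fun x => ((f i x : ℝ) : ℂ)) ⊆ U i := hsub.trans (hf i)
    have hc : HasCompactSupport (fun x => ((f i x : ℝ) : ℂ)) :=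
      Metric.isCompact_of_isClosed_isBounded (isClosed_tsupport _)
        ((hb i (hsK i i.2)).subset hsub2)
    obtain ⟨S, hS⟩ := TF.schwartz (φ := fun x => ((f i x : ℝ) : ℂ))
      (Complex.ofRealCLM.contDiff.comp (f i).contMDiff.contDiff) hc
    exact ⟨S, hS, by rw [hS]; exact hc, by rw [hS]; exact hsub2⟩
  choose S h1 h2 h3 using hS
  classical
  refine ⟨s, fun x => if h : x ∈ s then S ⟨x, h⟩ else 0, Metric.thickening δ K,
    Metric.isOpen_thickening, Metric.self_subset_thickening hδ K, ?_, ?_⟩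
  · intro x hx
    simp only [hx, dif_pos]
    exact ⟨hsK x hx, h2 ⟨x, hx⟩, h3 ⟨x, hx⟩⟩
  · intro y hy
    have := f.sum_eq_one (Metric.thickening_subset_cthickening δ K hy)
    rw [finsum_eq_sum_of_fintype] at this
    rw [← Finset.sum_attach, ← Finset.univ_eq_attach]
    have e : ∀ i : s, (if h : (i : R2) ∈ s then S ⟨i, h⟩ else 0) y = ((f i y : ℝ) : ℂ) := by
      intro i
      rw [dif_pos i.2, h1]
    rw [Finset.sum_congr rfl fun i _ => e i, ← Complex.ofReal_sum, this, Complex.ofReal_one]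

lemma HTildeElt.memHs {Γ : Set R2} (ψ : HTildeElt (-(1/2) : ℝ) Γ) : MemHs (-(1/2)) ψ.ft :=
  ⟨ψ.cont.aestronglyMeasurable, ψ.mem⟩

lemma elt_mem {Γ : Set R2} (hΓ : IsLipschitzDomain Γ) {k : ℝ} (hk : 0 < k)
    (ψ : HTildeElt (-(1/2) : ℝ) Γ) {u : HH}
    (hu : u =ᵐ[volume] fun ξ => ((√(ww k ξ) : ℝ) : ℂ) * ψ.ft ξ) : u ∈ VV Γ k := by
  have hK : IsCompact (closure Γ) :=
    Metric.isCompact_of_isClosed_isBounded isClosed_closure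
      (Metric.isBounded_closure_of_isBounded hΓ.2.1)
  choose! U v δ g1 g2 g3 g4 g5 using geom hΓ
  obtain ⟨s, χ, O, hO, hKO, hs, h1⟩ := pou hK U g1 g2 g3
  have hm := ψ.memHs
  have hsum := cut_sum s χ hO hKO h1 hm ψ.supp
  have hL : ∀ x, MemLp (fun ξ => ((√(ww k ξ) : ℝ) : ℂ) * cut (χ x) ψ.ft ξ) 2
      (volume : Measure R2) := fun x => memLp_sw hk (cut_mem _ hm) (cut_cont _ hm.tg)
  have hmem : ∀ x ∈ s, (hL x).toLp _ ∈ VV Γ k := by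
    intro x hx
    obtain ⟨a1, a2, a3⟩ := hs x hx
    refine local_mem hΓ.1 (cut_mem (χ x) hm) (cut_cont _ hm.tg) (hK.inter_right (isClosed_tsupport (χ x)))
      (cut_supp (χ x) hm.tg ψ.supp) (v := v x) (g4 x a1) ?_ (hL x).coeFn_toLp hk
    rintro y ⟨b1, b2⟩ t c1 c2
    exact g5 x a1 y ⟨b1, a3 b2⟩ t c1 c2
  have hEq : u = ∑ x ∈ s, (hL x).toLp _ := by
    apply Lp.ext
    have hall : ∀ᵐ ξ : R2, ∀ x ∈ s, (hL x).toLp _ ξ =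
        ((√(ww k ξ) : ℝ) : ℂ) * cut (χ x) ψ.ft ξ := by
      rw [eventually_all_finset]
      exact fun x _ => (hL x).coeFn_toLp
    filter_upwards [hu, hsum, coe_sum_ae s (fun x => (hL x).toLp _), hall] with ξ b1 b2 b3 b4
    rw [b1, b3, Finset.sum_congr rfl b4, ← Finset.mul_sum, b2]
  rw [hEq]
  exact Submodule.sum_mem _ hmem

lemma HH_norm_sq (u : HH) : ‖u‖ ^ 2 = ∫ ξ, ‖u ξ‖ ^ 2 := by
  have h1 : inner ℂ u u = (‖u‖ ^ 2 : ℂ) := inner_self_eq_norm_sq_to_K u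
  have e1 : ‖u‖ ^ 2 = (inner ℂ u u : ℂ).re := by rw [h1]; norm_cast
  rw [e1, L2.inner_def]
  have i1 : Integrable (fun a => inner ℂ (u a) (u a)) (volume : Measure R2) :=
    L2.integrable_inner (𝕜 := ℂ) u u
  have r1 := integral_re i1
  simp only [RCLike.re_to_complex] at r1
  rw [← r1]
  apply integral_congr_ae
  refine Eventually.of_forall fun ξ => ?_
  simp only
  rw [inner_self_eq_norm_sq_to_K]
  norm_cast

lemma HTildeElt.ext_ft {s : ℝ} {Γ : Set R2} {a b : HTildeElt s Γ} (h : a.ft = b.ft) : a = b := by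
  cases a; cases b; cases h; rfl

theorem main18 (Γ : Set R2) (hΓ : IsLipschitzDomain Γ) (k : ℝ) (hk : 0 < k) :
    ∃ C > 0, ∀ F : R2 → ℂ, MemHs (1/2) F →
      (∃! ψ : HTildeElt (-(1/2) : ℝ) Γ, AgreeOn Γ (fun ξ => mT k ξ * ψ.ft ξ) F) ∧
      (∀ ψ : HTildeElt (-(1/2) : ℝ) Γ, AgreeOn Γ (fun ξ => mT k ξ * ψ.ft ξ) F →
        wnorm (-(1/2)) ψ.ft ≤ C * wnorm (1/2) F) := by
  refine ⟨8 * (1 + k), by positivity, fun F hF => ?_⟩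
  obtain ⟨hFL, hFb⟩ := memLp_F hk hF
  have hf := hFL.coeFn_toLp
  set f : HH := hFL.toLp _
  have hU : ∀ ψ : HTildeElt (-(1/2) : ℝ) Γ, ∃ u : HH,
      u =ᵐ[volume] fun ξ => ((√(ww k ξ) : ℝ) : ℂ) * ψ.ft ξ := fun ψ =>
    ⟨_, (memLp_sw hk ψ.memHs ψ.cont).coeFn_toLp⟩
  refine ⟨?_, ?_⟩
  · obtain ⟨u, hu, hsol⟩ := lax_exists (VV Γ k) (VV_closed Γ k) (MM k) (MM_coer k) f
    obtain ⟨ψ, hψ⟩ := exists_elt hΓ.2.1 hk hu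
    refine ⟨ψ, (agree_iff hk hψ hf).2 hsol, fun ψ' h' => ?_⟩
    obtain ⟨u', hu'⟩ := hU ψ'
    have hsol' := (agree_iff hk hu' hf).1 h'
    have hmem' := elt_mem hΓ hk ψ' hu'
    have hz : ‖u' - u‖ ≤ 2 * ‖(0 : HH)‖ := by
      refine lax_bound (VV Γ k) (MM k) (MM_coer k) 0 (u' - u) (Submodule.sub_mem _ hmem' hu) ?_
      intro v hv
      have e : MM k (u' - u) - 0 = (MM k u' - f) - (MM k u - f) := by
        rw [map_sub]; abel
      rw [e, inner_sub_right, hsol' v hv, hsol v hv, sub_zero]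
    have hE : u' = u := by
      rw [norm_zero, mul_zero] at hz
      exact sub_eq_zero.1 (norm_le_zero_iff.1 hz)
    apply HTildeElt.ext_ft
    rw [← Continuous.ae_eq_iff_eq (volume : Measure R2) ψ'.cont ψ.cont]
    rw [hE] at hu'
    filter_upwards [hψ, hu', ae_ne k hk] with ξ a1 a2 a3
    have h1 : ((√(ww k ξ) : ℝ) : ℂ) ≠ 0 := by
      exact_mod_cast (Real.sqrt_pos.2 (ww_pos hk a3)).ne'
    exact mul_left_cancel₀ h1 (a2.symm.trans a1)
  · intro ψ h
    obtain ⟨u, hu⟩ := hU ψ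
    have hb := lax_bound (VV Γ k) (MM k) (MM_coer k) f u (elt_mem hΓ hk ψ hu)
      ((agree_iff hk hu hf).1 h)
    have hu2 := (memLp_two_iff_integrable_sq_norm (Lp.aestronglyMeasurable u)).1 (Lp.memLp u)
    have hf2 := (memLp_two_iff_integrable_sq_norm (Lp.aestronglyMeasurable f)).1 (Lp.memLp f)
    have b1 : ∫ ξ : R2, ((1 : ℝ) + ‖ξ‖ ^ 2) ^ (-(1/2) : ℝ) * ‖ψ.ft ξ‖ ^ 2 ≤
        4 * (1 + k) * ‖u‖ ^ 2 := by
      rw [HH_norm_sq, ← integral_const_mul]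
      refine integral_mono_ae ψ.mem (hu2.const_mul _) ?_
      filter_upwards [hu, ae_ne k hk] with ξ a1 a2
      rw [a1, norm_mul, mul_pow, Complex.norm_real, Real.norm_eq_abs, sq_abs,
        Real.sq_sqrt (ww_nonneg k ξ), ← mul_assoc]
      refine mul_le_mul_of_nonneg_right ?_ (sq_nonneg _)
      have c1 := J_neg_half_le ξ
      have c2 := ww_lower hk a2
      linarith
    have b2 : ‖f‖ ^ 2 ≤ 4 * (1 + k) * ∫ ξ : R2, ((1 : ℝ) + ‖ξ‖ ^ 2) ^ (1/2 : ℝ) * ‖F ξ‖ ^ 2 := by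
      rw [HH_norm_sq, ← integral_const_mul]
      refine integral_mono_ae hf2 (hF.2.const_mul _) ?_
      filter_upwards [hf] with ξ a1
      rw [a1]
      exact hFb ξ
    have b3 : ‖u‖ ^ 2 ≤ 4 * ‖f‖ ^ 2 := by
      have : 0 ≤ ‖u‖ := norm_nonneg u
      nlinarith
    unfold wnorm
    apply Real.sqrt_le_iff.2 ⟨by positivity, ?_⟩
    rw [mul_pow, Real.sq_sqrt (by
      unfold wnormSq
      refine mul_nonneg (by positivity) (integral_nonneg fun ξ => by positivity))]
    unfold wnormSq
    set A := ∫ ξ : R2, ((1 : ℝ) + ‖ξ‖ ^ 2) ^ (-(1/2) : ℝ) * ‖ψ.ft ξ‖ ^ 2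
    set B := ∫ ξ : R2, ((1 : ℝ) + ‖ξ‖ ^ 2) ^ (1/2 : ℝ) * ‖F ξ‖ ^ 2
    have b4 : A ≤ (8 * (1 + k)) ^ 2 * B := by
      calc A ≤ 4 * (1 + k) * ‖u‖ ^ 2 := b1
        _ ≤ 4 * (1 + k) * (4 * (4 * (1 + k) * B)) := by
            gcongr
            linarith
        _ = _ := by ring
    have hp : 0 ≤ ((2 * π) ^ 2)⁻¹ := by positivity
    calc _ ≤ ((2 * π) ^ 2)⁻¹ * ((8 * (1 + k)) ^ 2 * B) := mul_le_mul_of_nonneg_left b4 hp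
      _ = _ := by ring

end helpers18

/-- Proposition A.3: the Helmholtz single-layer operator
`T : H̃^{-1/2}(Γ) → H^{1/2}(Γ)` is bijective with a bounded inverse: for every
`f ∈ H^{1/2}(Γ)` (represented by the Fourier data `F` of any `H^{1/2}(ℝ²)` extension)
the equation `Tψ = f` on `Γ` has a unique solution `ψ ∈ H̃^{-1/2}(Γ)`, and
`‖ψ‖_{H^{-1/2}(ℝ²)} ≤ C ‖f‖_{H^{1/2}(Γ)}` with `C` independent of `f`. -/
theorem statement18 (Γ : Set R2) (hΓ : IsLipschitzDomain Γ) (k : ℝ) (hk : 0 < k) :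
    ∃ C > 0, ∀ F : R2 → ℂ, MemHs (1/2) F →
      (∃! ψ : HTildeElt (-(1/2) : ℝ) Γ, AgreeOn Γ (fun ξ => mT k ξ * ψ.ft ξ) F) ∧
      (∀ ψ : HTildeElt (-(1/2) : ℝ) Γ, AgreeOn Γ (fun ξ => mT k ξ * ψ.ft ξ) F →
        wnorm (-(1/2)) ψ.ft ≤ C * wnorm (1/2) F) := by
  exact main18 Γ hΓ k hk

end
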